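/- arXiv:1607.04499 — 5 statements merged into one kernel-verified Lean document; each statement's English description precedes it below -/
import Mathlib

section
/- Let F be a finite field with q elements, let n be a positive integer, and let A ∈ M_n(F) have rank r < n. Consider pairs (v, u) with v ∈ F^n a column vector and u ∈ F^n (viewed as a row vector), and the rank-one update A + v·uᵀ. Then: (1) the number of pairs (v, u) ∈ F^n × F^n such that A + v·uᵀ has rank r+1 is exactly (1 − q^(−(n−r)))² · q^(2n); (2) the number of pairs such that A + v·uᵀ has rank r−1 is at most q^(−2(n−r)) · q^(2n); (3) for every pair (v, u), the rank of A + v·uᵀ lies in {r−1, r, r+1}. -/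
open Matrix in
/-- A vector outside the row space is detected by the kernel. -/
lemma r1_exists_ker {F : Type*} [Field F] {n : ℕ} (A : Matrix (Fin n) (Fin n) F) (u : Fin n → F)
    (hu : u ∉ LinearMap.range Aᵀ.mulVecLin) : ∃ x, A *ᵥ x = 0 ∧ u ⬝ᵥ x ≠ 0 := by
  obtain ⟨f, hf, hle⟩ := Submodule.exists_le_ker_of_notMem hu
  obtain ⟨x, rfl⟩ := (dotProductEquiv F (Fin n)).surjective f
  refine ⟨x, ?_, ?_⟩
  · apply dotProduct_eq_zero
    intro y
    have := hle ⟨y, rfl⟩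
    simp only [LinearMap.mem_ker, dotProductEquiv_apply_apply, mulVecLin_apply] at this
    rw [mulVec_transpose, dotProduct_comm, ← dotProduct_mulVec] at this
    simpa [dotProduct_comm] using this
  · simpa [dotProduct_comm] using hf

open Matrix in
lemma r1_apply {F : Type*} [Field F] {n : ℕ} (A : Matrix (Fin n) (Fin n) F) (v u x : Fin n → F) :
    (A + vecMulVec v u) *ᵥ x = A *ᵥ x + (u ⬝ᵥ x) • v := by
  rw [add_mulVec, vecMulVec_mulVec]
  simp

open Matrix in
lemma r1_mem {F : Type*} [Field F] {n : ℕ} (A : Matrix (Fin n) (Fin n) F) (v u : Fin n → F)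
    (hu : u ∉ LinearMap.range Aᵀ.mulVecLin) :
    v ∈ LinearMap.range (A + vecMulVec v u).mulVecLin := by
  obtain ⟨x, hx, hux⟩ := r1_exists_ker A u hu
  refine ⟨(u ⬝ᵥ x)⁻¹ • x, ?_⟩
  rw [map_smul, mulVecLin_apply, r1_apply, hx, zero_add, smul_smul, inv_mul_cancel₀ hux, one_smul]

open Matrix in
lemma r1_rank_le {F : Type*} [Field F] {n : ℕ} (A : Matrix (Fin n) (Fin n) F) (v u : Fin n → F)
    (hv : v ∈ LinearMap.range A.mulVecLin) : (A + vecMulVec v u).rank ≤ A.rank := by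
  apply Submodule.finrank_mono
  rintro _ ⟨x, rfl⟩
  rw [mulVecLin_apply, r1_apply]
  exact add_mem ⟨x, rfl⟩ (Submodule.smul_mem _ _ hv)

open Matrix in
lemma r1_rank_le_succ {F : Type*} [Field F] {n : ℕ} (A : Matrix (Fin n) (Fin n) F)
    (v u : Fin n → F) : (A + vecMulVec v u).rank ≤ A.rank + 1 := by
  have h : LinearMap.range (A + vecMulVec v u).mulVecLin ≤
      LinearMap.range A.mulVecLin ⊔ Submodule.span F {v} := by
    rintro _ ⟨x, rfl⟩
    rw [mulVecLin_apply, r1_apply]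
    exact Submodule.add_mem_sup ⟨x, rfl⟩
      (Submodule.smul_mem _ _ (Submodule.mem_span_singleton_self v))
  refine (Submodule.finrank_mono h).trans ((Submodule.finrank_add_le_finrank_add_finrank _ _).trans ?_)
  exact Nat.add_le_add_left ((finrank_span_le_card {v}).trans (by simp)) _

open Matrix in
lemma r1_transpose {F : Type*} [Field F] {n : ℕ} (A : Matrix (Fin n) (Fin n) F)
    (v u : Fin n → F) : (A + vecMulVec v u)ᵀ = Aᵀ + vecMulVec u v := by
  rw [transpose_add, transpose_vecMulVec]

open Matrix in
lemma r1_neg {F : Type*} [Field F] {n : ℕ} (A : Matrix (Fin n) (Fin n) F)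
    (v u : Fin n → F) : (A + vecMulVec v u) + vecMulVec (-v) u = A := by
  rw [neg_vecMulVec]; simp

open Matrix in
lemma r1_succ_iff {F : Type*} [Field F] {n : ℕ} (A : Matrix (Fin n) (Fin n) F)
    (v u : Fin n → F) : (A + vecMulVec v u).rank = A.rank + 1 ↔
      v ∉ LinearMap.range A.mulVecLin ∧ u ∉ LinearMap.range Aᵀ.mulVecLin := by
  constructor
  · intro h
    refine ⟨fun hv => ?_, fun hu => ?_⟩
    · have := r1_rank_le A v u hv
      omega
    · have := r1_rank_le Aᵀ u v hu
      rw [← r1_transpose, rank_transpose, rank_transpose] at this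
      omega
  · rintro ⟨hv, hu⟩
    refine le_antisymm (r1_rank_le_succ A v u) ?_
    have hm := r1_mem A v u hu
    apply Submodule.finrank_lt_finrank_of_lt
    refine lt_of_le_of_ne ?_ (fun h => hv (h ▸ hm))
    rintro _ ⟨x, rfl⟩
    have h : A.mulVecLin x = (A + vecMulVec v u).mulVecLin x - (u ⬝ᵥ x) • v := by
      rw [mulVecLin_apply, mulVecLin_apply, r1_apply, add_sub_cancel_right]
    rw [h]
    exact sub_mem ⟨x, rfl⟩ (Submodule.smul_mem _ _ hm)

open Matrix in
lemma r1_pred_left {F : Type*} [Field F] {n : ℕ} (A : Matrix (Fin n) (Fin n) F)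
    (v u : Fin n → F) (h : (A + vecMulVec v u).rank + 1 = A.rank) :
    v ∈ LinearMap.range A.mulVecLin := by
  have h2 := (r1_succ_iff (A + vecMulVec v u) (-v) u).1 (by rw [r1_neg, h])
  have h3 := r1_mem (A + vecMulVec v u) (-v) u h2.2
  rw [r1_neg] at h3
  simpa using neg_mem h3

open Matrix in
lemma r1_pred_right {F : Type*} [Field F] {n : ℕ} (A : Matrix (Fin n) (Fin n) F)
    (v u : Fin n → F) (h : (A + vecMulVec v u).rank + 1 = A.rank) :
    u ∈ LinearMap.range Aᵀ.mulVecLin := by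
  apply r1_pred_left Aᵀ u v
  rw [← r1_transpose, rank_transpose, rank_transpose, h]

open Matrix in
lemma r1_card {F : Type*} [Field F] [Fintype F] {n : ℕ} (A : Matrix (Fin n) (Fin n) F) :
    Nat.card (LinearMap.range A.mulVecLin) = Fintype.card F ^ A.rank := by
  classical
  rw [Module.natCard_eq_pow_finrank (K := F), Nat.card_eq_fintype_card]
  rfl

open Matrix in
lemma r1_card_compl {F : Type*} [Field F] [Fintype F] {n : ℕ} (A : Matrix (Fin n) (Fin n) F) :
    Nat.card {v : Fin n → F // v ∉ LinearMap.range A.mulVecLin} =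
      Fintype.card F ^ n - Fintype.card F ^ A.rank := by
  classical
  rw [← r1_card A, Nat.card_eq_fintype_card, Nat.card_eq_fintype_card,
    Fintype.card_subtype_compl]
  simp

lemma r1_card_prod {α β : Type*} (P : α × β → Prop) (p : α → Prop) (q : β → Prop)
    (h : ∀ a b, P (a, b) ↔ p a ∧ q b) :
    Nat.card {x // P x} = Nat.card {a // p a} * Nat.card {b // q b} := by
  rw [← Nat.card_prod]
  exact Nat.card_congr ((Equiv.subtypeEquivRight (fun x : α × β => h x.1 x.2)).trans
    Equiv.subtypeProdEquivProd)

/-- counting rank-one updates of a rank-`r` matrix (`r < n`) over a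
finite field with `q` elements: exactly `(q^n - q^r)^2 = (1 - q^{-(n-r)})^2 q^{2n}`
pairs `(v, u)` give rank `r+1`, at most `q^{2r} = q^{-2(n-r)} q^{2n}` pairs give
rank `r-1`, and the rank always lies in `{r-1, r, r+1}`. -/
theorem rank_one_update_rank_counts
    {F : Type*} [Field F] [Fintype F] (n r q : ℕ) (hq : q = Fintype.card F)
    (A : Matrix (Fin n) (Fin n) F) (hr : A.rank = r) (hrn : r < n) :
    Nat.card {p : (Fin n → F) × (Fin n → F) //
        (A + Matrix.vecMulVec p.1 p.2).rank = r + 1} = (q ^ n - q ^ r) ^ 2 ∧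
    Nat.card {p : (Fin n → F) × (Fin n → F) //
        (A + Matrix.vecMulVec p.1 p.2).rank + 1 = r} ≤ q ^ (2 * r) ∧
    ∀ v u : Fin n → F,
      (A + Matrix.vecMulVec v u).rank + 1 = r ∨
      (A + Matrix.vecMulVec v u).rank = r ∨
      (A + Matrix.vecMulVec v u).rank = r + 1 := by
  subst hq hr
  refine ⟨?_, ?_, ?_⟩
  · rw [r1_card_prod _ _ _ (fun v u => r1_succ_iff A v u), r1_card_compl, r1_card_compl,
      Matrix.rank_transpose, sq]
  · have h : Nat.card (LinearMap.range A.mulVecLin × LinearMap.range A.transpose.mulVecLin) =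
        Fintype.card F ^ (2 * A.rank) := by
      rw [Nat.card_prod, r1_card, r1_card, Matrix.rank_transpose, two_mul, pow_add]
    rw [← h]
    refine Nat.card_le_card_of_injective
      (fun p => (⟨p.1.1, r1_pred_left A _ _ p.2⟩, ⟨p.1.2, r1_pred_right A _ _ p.2⟩)) ?_
    rintro ⟨⟨a, b⟩, h1⟩ ⟨⟨c, d⟩, h2⟩ h3
    simpa using h3
  · intro v u
    have h1 := r1_rank_le_succ A v u
    have h2 := r1_rank_le_succ (A + Matrix.vecMulVec v u) (-v) u
    rw [r1_neg] at h2
    omega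
end

section
/- Let F be a finite field with q elements, let n be a positive integer, let A ∈ M_n(F) have rank r < n, and let k be a positive integer with k > n − r. Then the number of pairs (U, V) with U ∈ F^(k×n) and V ∈ F^(n×k) such that A + V·U is invertible is at least ((q⁴ − 2)(q² − q − 1) / (q³(q³ + q² + q + 1))) · q^(2nk). In particular this fraction is at least 1 − 2/q. -/
lemma count_preim {F M N : Type*} [Field F] [AddCommGroup M] [AddCommGroup N] [Module F M]
    [Module F N] (L : M →ₗ[F] N) (hL : Function.Surjective L) (P : N → Prop) :
    Nat.card {m // P (L m)} * Nat.card N = Nat.card {y // P y} * Nat.card M := by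
  obtain ⟨g, hg⟩ := L.exists_rightInverse_of_surjective (LinearMap.range_eq_top.2 hL)
  have hg' : ∀ y, L (g y) = y := fun y => by
    simpa using LinearMap.congr_fun hg y
  have key : ∀ Q : N → Prop,
      Nat.card {m // Q (L m)} = Nat.card {y // Q y} * Nat.card (LinearMap.ker L) := by
    intro Q
    rw [← Nat.card_prod]
    refine Nat.card_congr
      { toFun := fun m => (⟨L m.1, m.2⟩, ⟨m.1 - g (L m.1), by simp [hg']⟩)
        invFun := fun p => ⟨g p.1.1 + p.2.1, by
          have h2 : L p.2.1 = 0 := p.2.2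
          rw [map_add, hg', h2, add_zero]; exact p.1.2⟩
        left_inv := fun m => by simp
        right_inv := fun p => by
          have h2 : L p.2.1 = 0 := p.2.2
          ext <;> simp [hg', h2] }
  have h1 := key P
  have h2 := key (fun _ => True)
  rw [Nat.card_congr (Equiv.subtypeUnivEquiv (fun _ => trivial)),
    Nat.card_congr (Equiv.subtypeUnivEquiv (fun _ => trivial))] at h2
  rw [h1, h2]; ring

lemma prod_bound (q : ℚ) (hq : 2 ≤ q) (s : ℕ) :
    (1 - 1 / q - 1 / q ^ 2) * q ^ (s * s) ≤ ∏ i : Fin s, (q ^ s - q ^ (i : ℕ)) := by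
  have hq0 : 0 < q := by linarith
  set x := 1 / q with hx
  have hx0 : 0 < x := by positivity
  have hx1 : x ≤ 1 / 2 := by rw [hx]; gcongr
  have hxq : x * q = 1 := by rw [hx]; field_simp
  have e : ∏ i : Fin s, (q ^ s - q ^ (i : ℕ)) =
      (∏ i ∈ Finset.range s, (1 - x ^ (i + 1))) * q ^ (s * s) := by
    rw [Fin.prod_univ_eq_prod_range (fun i => q ^ s - q ^ i) s,
      ← Finset.prod_range_reflect, pow_mul]
    have hc : (q ^ s) ^ s = ∏ _i ∈ Finset.range s, q ^ s := by simp
    rw [hc, ← Finset.prod_mul_distrib]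
    refine Finset.prod_congr rfl fun i hi => ?_
    have hi := Finset.mem_range.1 hi
    obtain ⟨j, rfl⟩ : ∃ j, s = i + 1 + j := ⟨s - (i + 1), by omega⟩
    have : i + 1 + j - 1 - i = j := by omega
    rw [this, sub_mul, one_mul, pow_add q (i+1) j, ← mul_assoc, ← mul_pow, hxq]
    simp
  have h2 : 1 / q ^ 2 = x ^ 2 := by rw [hx]; simp
  rw [e, h2]
  refine mul_le_mul_of_nonneg_right ?_ (by positivity)
  have main : ∀ t, 1 - x - x ^ 2 + x ^ (t + 2) ≤ ∏ i ∈ Finset.range (t + 1), (1 - x ^ (i + 1)) := by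
    intro t
    induction t with
    | zero => simp
    | succ t ih =>
      rw [Finset.prod_range_succ]
      have hp : 0 ≤ 1 - x ^ (t + 1 + 1) := by
        have := pow_le_one₀ (n := t + 1 + 1) hx0.le (by linarith)
        linarith
      refine le_trans ?_ (mul_le_mul_of_nonneg_right ih hp)
      have h3 : x ^ (2 * t + 4) ≤ x ^ (t + 4) :=
        pow_le_pow_of_le_one hx0.le (by linarith) (by omega)
      have : (1 - x - x ^ 2 + x ^ (t + 2)) * (1 - x ^ (t + 1 + 1)) - (1 - x - x ^ 2 + x ^ (t + 1 + 2))
        = x ^ (t + 4) - x ^ (2 * t + 4) := by ring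
      linarith
  rcases s with _ | t
  · simp; nlinarith
  · exact le_trans (by have : 0 ≤ x ^ (t + 2) := by positivity
                       linarith) (main t)

lemma count_inj {F K C : Type*} [Field F] [Fintype F] [AddCommGroup K] [AddCommGroup C]
    [Module F K] [Module F C] [FiniteDimensional F K] [FiniteDimensional F C]
    (h : Module.finrank F K = Module.finrank F C) (q : ℚ) (hq : q = Fintype.card F) :
    (1 - 1 / q - 1 / q ^ 2) * Nat.card (K →ₗ[F] C) ≤
      Nat.card {T : K →ₗ[F] C // Function.Injective T} := by
  have : Finite C := Module.finite_of_finite F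
  have : Fintype C := Fintype.ofFinite C
  let b := Module.finBasis F K
  have e : Nat.card {T : K →ₗ[F] C // Function.Injective T} =
      Nat.card {f : Fin (Module.finrank F K) → C // LinearIndependent F f} := by
    refine (Nat.card_congr ((b.constr F).toEquiv.subtypeEquiv ?_)).symm
    intro f
    constructor
    · intro hf
      have h2 : LinearIndependent F (b.constr F f ∘ b) := by
        convert hf using 1; ext i; simp
      rw [← LinearMap.ker_eq_bot]
      rw [LinearMap.ker_eq_bot']
      intro m hm
      have h3 := Fintype.linearIndependent_iff.1 hf (b.repr m) (by
        rw [← hm]; simp [Module.Basis.constr_apply_fintype])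
      apply b.repr.injective
      ext i; simpa using h3 i
    · intro hf
      have h2 := b.linearIndependent.map' (b.constr F f) (LinearMap.ker_eq_bot.2 hf)
      have hfe : f = b.constr F f ∘ b := by ext i; simp
      rw [hfe]; exact h2
  have c2 : Fintype.card F = Nat.card F := by simp
  have hq2 : 2 ≤ q := by
    rw [hq]; exact_mod_cast Fintype.one_lt_card
  rw [e, h, card_linearIndependent le_rfl, Module.natCard_eq_pow_finrank (K := F),
    Module.finrank_linearMap, h]
  have := prod_bound q hq2 (Module.finrank F C)
  refine le_trans (le_of_eq ?_) (this.trans (le_of_eq ?_))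
  · rw [hq]; push_cast; simp
  · push_cast
    refine Finset.prod_congr rfl fun i _ => ?_
    rw [Nat.cast_sub (Nat.pow_le_pow_right Fintype.card_pos i.2.le), hq]; push_cast; rfl

lemma count_U {F : Type*} [Field F] [Fintype F] (n k : ℕ) (q : ℚ) (hq : q = Fintype.card F)
    (A : Matrix (Fin n) (Fin n) F) (V : Matrix (Fin n) (Fin k) F)
    (hV : LinearMap.range A.mulVecLin ⊔ LinearMap.range V.mulVecLin = ⊤) :
    (1 - 1 / q - 1 / q ^ 2) * Nat.card (Matrix (Fin k) (Fin n) F) ≤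
      Nat.card {U : Matrix (Fin k) (Fin n) F // IsUnit (A + V * U)} := by
  let a := A.mulVecLin
  let v := V.mulVecLin
  let C := LinearMap.range v
  let K := C.comap a
  have haK : ∀ x : K, a x.1 ∈ C := fun x => x.2
  have hfin : Module.finrank F K = Module.finrank F C := by
    have h1 := LinearMap.finrank_range_add_finrank_ker (C.mkQ ∘ₗ a)
    have hk : LinearMap.ker (C.mkQ ∘ₗ a) = K := by
      rw [LinearMap.ker_comp, Submodule.ker_mkQ]
    have hr : LinearMap.range (C.mkQ ∘ₗ a) = ⊤ := by
      rw [LinearMap.range_comp, Submodule.map_mkQ_eq_top, sup_comm]; exact hV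
    rw [hk, hr, finrank_top] at h1
    have h2 := C.finrank_quotient_add_finrank
    omega
  let aK : K →ₗ[F] C := (a ∘ₗ K.subtype).codRestrict C haK
  let L : Matrix (Fin k) (Fin n) F →ₗ[F] (K →ₗ[F] C) :=
    { toFun := fun U => v.rangeRestrict ∘ₗ U.mulVecLin ∘ₗ K.subtype
      map_add' := fun U W => by ext x; simp [Matrix.mulVecLin_add]
      map_smul' := fun c U => by ext x; simp }
  have hL : Function.Surjective L := by
    intro T
    obtain ⟨g, hg⟩ := v.rangeRestrict.exists_rightInverse_of_surjective v.range_rangeRestrict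
    obtain ⟨T', hT'⟩ := LinearMap.exists_extend (g ∘ₗ T)
    refine ⟨LinearMap.toMatrix' T', ?_⟩
    change v.rangeRestrict ∘ₗ (LinearMap.toMatrix' T').mulVecLin ∘ₗ K.subtype = T
    rw [← Matrix.toLin'_apply', Matrix.toLin'_toMatrix', hT', ← LinearMap.comp_assoc, hg,
      LinearMap.id_comp]
  have hiff : ∀ U, IsUnit (A + V * U) ↔ Function.Injective (aK + L U) := by
    intro U
    rw [← Matrix.mulVec_injective_iff_isUnit]
    have hval : ∀ x : K, ((aK + L U) x : Fin n → F) = (A + V * U).mulVec x.1 := by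
      intro x
      rw [Matrix.add_mulVec, ← Matrix.mulVec_mulVec]
      rfl
    constructor
    · intro hi x y hxy
      apply Subtype.ext
      apply hi
      rw [← hval, ← hval, hxy]
    · intro hi
      change Function.Injective (A + V * U).mulVecLin
      rw [← LinearMap.ker_eq_bot, LinearMap.ker_eq_bot']
      intro m hm
      have hm' : A.mulVec m + V.mulVec (U.mulVec m) = 0 := by
        rw [Matrix.mulVec_mulVec, ← Matrix.add_mulVec]; exact hm
      have hmK : m ∈ K := by
        change A.mulVec m ∈ C
        rw [eq_neg_of_add_eq_zero_left hm']
        exact C.neg_mem ⟨_, rfl⟩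
      have h0 : (aK + L U) ⟨m, hmK⟩ = 0 := by
        apply Subtype.ext
        rw [hval]; exact hm
      have := (map_eq_zero_iff (aK + L U) hi).1 h0
      simpa using this
  have hc := count_preim (F := F) (M := Matrix (Fin k) (Fin n) F) (N := K →ₗ[F] C) L hL
    (fun T : K →ₗ[F] C => Function.Injective (aK + T : K →ₗ[F] C))
  have e2 : Nat.card {T : K →ₗ[F] C // Function.Injective (aK + T)} =
      Nat.card {T : K →ₗ[F] C // Function.Injective T} :=
    Nat.card_congr ((Equiv.addLeft aK).subtypeEquiv (fun T => Iff.rfl))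
  have e1 : Nat.card {U : Matrix (Fin k) (Fin n) F // IsUnit (A + V * U)} =
      Nat.card {U // Function.Injective (aK + L U)} :=
    Nat.card_congr ((Equiv.refl _).subtypeEquiv hiff)
  have hci := count_inj (K := K) (C := C) hfin q hq
  rw [e2] at hc
  rw [e1]
  have : Finite (K →ₗ[F] C) := Module.finite_of_finite F
  have hpos : (0 : ℚ) < Nat.card (K →ₗ[F] C) := by exact_mod_cast Nat.card_pos
  have hc' : (Nat.card {U // Function.Injective (aK + L U)} : ℚ) * Nat.card (K →ₗ[F] C) =
    Nat.card {T : K →ₗ[F] C // Function.Injective T} * Nat.card (Matrix (Fin k) (Fin n) F) := by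
    exact_mod_cast hc
  refine le_of_mul_le_mul_right ?_ hpos
  rw [hc', mul_right_comm]
  gcongr

lemma count_V {F : Type*} [Field F] [Fintype F] (n r k : ℕ) (hrn : r < n) (hk : n - r < k)
    (q : ℚ) (hq : q = Fintype.card F)
    (A : Matrix (Fin n) (Fin n) F) (hrank : A.rank = r) :
    (1 - 1 / (q * (q - 1))) * Nat.card (Matrix (Fin n) (Fin k) F) ≤
      Nat.card {V : Matrix (Fin n) (Fin k) F //
        LinearMap.range A.mulVecLin ⊔ LinearMap.range V.mulVecLin = ⊤} := by
  classical
  have hq2 : 2 ≤ q := by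
    rw [hq]; exact_mod_cast Fintype.one_lt_card
  let good : Matrix (Fin n) (Fin k) F → Prop := fun V =>
    LinearMap.range A.mulVecLin ⊔ LinearMap.range V.mulVecLin = ⊤
  let W := {w : Fin n → F // w ≠ 0 ∧ Matrix.vecMul w A = 0}
  let S := Σ w : W, {V : Matrix (Fin n) (Fin k) F // Matrix.vecMul w.1 V = 0}
  have hbad : ∀ V, ¬ good V → ∃ w : Fin n → F, w ≠ 0 ∧ Matrix.vecMul w A = 0 ∧
      Matrix.vecMul w V = 0 := by
    intro V hV
    obtain ⟨f, hf0, hf⟩ := Submodule.exists_le_ker_of_lt_top _ (lt_top_iff_ne_top.2 hV)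
    let w : Fin n → F := fun i => f (Pi.single i 1)
    have hfw : ∀ x, f x = w ⬝ᵥ x := by
      intro x
      conv_lhs => rw [pi_eq_sum_univ' x]
      simp [w, dotProduct, mul_comm]
    have hvm : ∀ (m : ℕ) (B : Matrix (Fin n) (Fin m) F),
        LinearMap.range B.mulVecLin ≤ LinearMap.ker f → Matrix.vecMul w B = 0 := by
      intro m B hB
      ext j
      have h1 : f (B.mulVec (Pi.single j 1)) = 0 := hB ⟨_, rfl⟩
      rw [hfw, Matrix.dotProduct_mulVec] at h1
      simpa using h1
    refine ⟨w, ?_, hvm _ _ (le_sup_left.trans hf), hvm _ _ (le_sup_right.trans hf)⟩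
    intro hw
    apply hf0
    ext x
    simp [hfw, hw]
  choose! wf hw0 hwA hwV using hbad
  have hinj : Nat.card ({V // ¬ good V} × Fˣ) ≤ Nat.card S := by
    let φ : {V // ¬ good V} × Fˣ → S := fun p =>
      ⟨⟨(p.2 : F) • wf p.1.1, smul_ne_zero p.2.ne_zero (hw0 _ p.1.2), by
        rw [Matrix.smul_vecMul, hwA _ p.1.2, smul_zero]⟩, ⟨p.1.1, by
        change Matrix.vecMul ((p.2 : F) • wf p.1.1) p.1.1 = 0
        rw [Matrix.smul_vecMul, hwV _ p.1.2, smul_zero]⟩⟩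
    apply Nat.card_le_card_of_injective φ
    rintro ⟨⟨V, hV⟩, c⟩ ⟨⟨V', hV'⟩, c'⟩ h
    have h1 : V = V' := congrArg (fun s : S => s.2.1) h
    subst h1
    have h2 : (c : F) • wf V = (c' : F) • wf V := congrArg (fun s : S => s.1.1) h
    have h3 := smul_left_injective F (hw0 V hV) h2
    have h4 : c = c' := Units.ext h3
    rw [h4]
  have hfib : ∀ w : W, Nat.card {V : Matrix (Fin n) (Fin k) F // Matrix.vecMul w.1 V = 0} *
      Nat.card (Fin k → F) = Nat.card (Matrix (Fin n) (Fin k) F) := by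
    intro w
    let L : Matrix (Fin n) (Fin k) F →ₗ[F] (Fin k → F) :=
      { toFun := fun V => Matrix.vecMul w.1 V
        map_add' := fun V V' => Matrix.vecMul_add _ _ _
        map_smul' := fun c V => by simp [Matrix.vecMul_smul] }
    have hL : Function.Surjective L := by
      intro y
      obtain ⟨i, hi⟩ := Function.ne_iff.1 w.2.1
      refine ⟨Matrix.vecMulVec (Pi.single i (w.1 i)⁻¹) y, ?_⟩
      change Matrix.vecMul w.1 _ = y
      rw [Matrix.vecMul_vecMulVec]
      have hi' : w.1 i ≠ 0 := hi
      simp [hi']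
    have h := count_preim (F := F) L hL (fun y => y = 0)
    simpa using! h
  have hS : Nat.card S * Nat.card (Fin k → F) = Nat.card W * Nat.card (Matrix (Fin n) (Fin k) F) := by
    rw [Nat.card_sigma, Finset.sum_mul, Finset.sum_congr rfl (fun w _ => hfib w)]
    simp
  have hW : Nat.card W ≤ Fintype.card F ^ (n - r) := by
    have h1 : Nat.card W ≤ Nat.card (LinearMap.ker A.transpose.mulVecLin) := by
      apply Nat.card_le_card_of_injective (fun w : W => (⟨w.1, by
        rw [LinearMap.mem_ker, Matrix.mulVecLin_apply, Matrix.mulVec_transpose]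
        exact w.2.2⟩ : LinearMap.ker A.transpose.mulVecLin))
      intro w w' h
      apply Subtype.ext
      exact congrArg (fun z : LinearMap.ker A.transpose.mulVecLin => z.1) h
    refine h1.trans (le_of_eq ?_)
    rw [Module.natCard_eq_pow_finrank (K := F), Nat.card_eq_fintype_card]
    congr 1
    have h2 := LinearMap.finrank_range_add_finrank_ker A.transpose.mulVecLin
    have h3 : Module.finrank F (LinearMap.range A.transpose.mulVecLin) = r := by
      rw [← hrank, ← Matrix.rank_transpose]; rfl
    rw [h3, Module.finrank_fintype_fun_eq_card, Fintype.card_fin] at h2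
    omega
  have hsum : Nat.card {V // good V} + Nat.card {V // ¬ good V} =
      Nat.card (Matrix (Fin n) (Fin k) F) := by
    rw [← Nat.card_sum]
    exact Nat.card_congr (Equiv.sumCompl good)
  have hu : (Nat.card Fˣ : ℚ) = q - 1 := by
    rw [Nat.card_units, Nat.card_eq_fintype_card, Nat.cast_sub Fintype.card_pos, hq]; simp
  have hkc : (Nat.card (Fin k → F) : ℚ) = q ^ k := by simp [hq]
  set M : ℚ := ((Nat.card (Matrix (Fin n) (Fin k) F) : ℕ) : ℚ) with hM
  set B : ℚ := ((Nat.card {V // ¬ good V} : ℕ) : ℚ) with hB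
  have hsumQ : (Nat.card {V // good V} : ℚ) + B = M := by rw [hB, hM]; exact_mod_cast hsum
  have h1 : B * (q - 1) ≤ Nat.card S := by
    rw [← hu, hB, ← Nat.cast_mul, ← Nat.card_prod]; exact_mod_cast hinj
  have h2 : (Nat.card S : ℚ) * q ^ k = Nat.card W * M := by
    rw [← hkc, hM]; exact_mod_cast hS
  have h3 : (Nat.card W : ℚ) ≤ q ^ (n - r) := by
    rw [hq]; exact_mod_cast hW
  have hM0 : 0 ≤ M := by positivity
  have h4 : (Nat.card S : ℚ) * q ≤ M := by
    have hp : (0 : ℚ) < q ^ (k - 1) := by positivity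
    refine le_of_mul_le_mul_right ?_ hp
    have e1 : (Nat.card S : ℚ) * q * q ^ (k - 1) = Nat.card S * q ^ k := by
      rw [mul_assoc, ← pow_succ']; congr 2; omega
    rw [e1, h2, mul_comm M]
    refine mul_le_mul_of_nonneg_right (h3.trans ?_) hM0
    exact pow_le_pow_right₀ (by linarith) (by omega)
  have h5 : B * (q * (q - 1)) ≤ M := by nlinarith
  have h6 : B ≤ M / (q * (q - 1)) := by
    rw [le_div_iff₀ (by nlinarith)]; exact h5
  have h7 : (1 - 1 / (q * (q - 1))) * M = M - M / (q * (q - 1)) := by ring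
  rw [h7]
  change _ ≤ (Nat.card {V // good V} : ℚ)
  linarith

/-- if `A` has rank `r < n` and `k > n - r`, then the number of pairs
`(U, V)` with `A + V·U` invertible is at least
`((q⁴ - 2)(q² - q - 1) / (q³(q³ + q² + q + 1))) · q^(2nk)`,
and this fraction is at least `1 - 2/q`. -/
theorem additive_preconditioner_nonsingular_count_excess
    {F : Type*} [Field F] [Fintype F] (n r k : ℕ) (hrn : r < n) (hk : n - r < k)
    (hkpos : 0 < k)
    (q : ℚ) (hq : q = (Fintype.card F : ℚ))
    (A : Matrix (Fin n) (Fin n) F) (hrank : A.rank = r) :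
    ((q ^ 4 - 2) * (q ^ 2 - q - 1) / (q ^ 3 * (q ^ 3 + q ^ 2 + q + 1))) *
        q ^ (2 * n * k) ≤
      (Nat.card {p : Matrix (Fin k) (Fin n) F × Matrix (Fin n) (Fin k) F //
        IsUnit (A + p.2 * p.1)} : ℚ) ∧
    1 - 2 / q ≤ (q ^ 4 - 2) * (q ^ 2 - q - 1) / (q ^ 3 * (q ^ 3 + q ^ 2 + q + 1)) := by
  classical
  have hq2 : 2 ≤ q := by
    rw [hq]; exact_mod_cast Fintype.one_lt_card
  have hden : 0 < q ^ 3 * (q ^ 3 + q ^ 2 + q + 1) := by positivity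
  constructor
  · let good : Matrix (Fin n) (Fin k) F → Prop := fun V =>
      LinearMap.range A.mulVecLin ⊔ LinearMap.range V.mulVecLin = ⊤
    have hV := count_V n r k hrn hk q hq A hrank
    have hcN : (Nat.card (Matrix (Fin k) (Fin n) F) : ℚ) = q ^ (n * k) := by
      rw [Module.natCard_eq_pow_finrank (K := F), Module.finrank_matrix]
      simp [hq, mul_comm]
    have hcM : (Nat.card (Matrix (Fin n) (Fin k) F) : ℚ) = q ^ (n * k) := by
      rw [Module.natCard_eq_pow_finrank (K := F), Module.finrank_matrix]
      simp [hq]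
    have hcard : Nat.card {p : Matrix (Fin k) (Fin n) F × Matrix (Fin n) (Fin k) F //
        IsUnit (A + p.2 * p.1)} =
        ∑ V : Matrix (Fin n) (Fin k) F,
          Nat.card {U : Matrix (Fin k) (Fin n) F // IsUnit (A + V * U)} := by
      rw [← Nat.card_sigma]
      exact Nat.card_congr
        { toFun := fun p => ⟨p.1.2, ⟨p.1.1, p.2⟩⟩
          invFun := fun s => ⟨(s.2.1, s.1), s.2.2⟩
          left_inv := fun p => rfl
          right_inv := fun s => rfl }
    set c : ℚ := 1 - 1 / q - 1 / q ^ 2 with hc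
    have hc0 : 0 ≤ c := by
      have : c = (q ^ 2 - q - 1) / q ^ 2 := by rw [hc]; field_simp
      rw [this]
      apply div_nonneg <;> nlinarith
    have hlow : (Nat.card {V // good V} : ℚ) * (c * q ^ (n * k)) ≤
        ∑ V : Matrix (Fin n) (Fin k) F,
          (Nat.card {U : Matrix (Fin k) (Fin n) F // IsUnit (A + V * U)} : ℚ) := by
      rw [Nat.card_eq_fintype_card, Fintype.card_subtype, ← nsmul_eq_mul, ← Finset.sum_const]
      refine le_trans (Finset.sum_le_sum (fun V hVg => ?_))
        (Finset.sum_le_sum_of_subset_of_nonneg (Finset.subset_univ _)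
          (fun V _ _ => Nat.cast_nonneg _))
      have := count_U n k q hq A V (Finset.mem_filter.1 hVg).2
      rwa [hcN] at this
    rw [hcard, Nat.cast_sum]
    refine le_trans ?_ hlow
    have hV' : (1 - 1 / (q * (q - 1))) * q ^ (n * k) ≤ (Nat.card {V // good V} : ℚ) := by
      rw [← hcM]; exact hV
    refine le_trans ?_ (mul_le_mul_of_nonneg_right hV' (by positivity))
    have e : (1 - 1 / (q * (q - 1))) * q ^ (n * k) * (c * q ^ (n * k)) =
        ((1 - 1 / (q * (q - 1))) * c) * q ^ (2 * n * k) := by ring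
    rw [e]
    refine mul_le_mul_of_nonneg_right ?_ (by positivity)
    have hq1 : 0 < q - 1 := by linarith
    have e2 : (1 - 1 / (q * (q - 1))) * c =
        (q ^ 2 - q - 1) * (q ^ 2 - q - 1) / (q ^ 3 * (q - 1)) := by
      rw [hc]; field_simp
    rw [e2, div_le_div_iff₀ hden (by positivity)]
    have h0 : 0 ≤ q ^ 2 - q - 1 := by nlinarith
    have h1 : 0 ≤ q ^ 4 - q ^ 3 - q ^ 2 - 3 := by
      obtain ⟨t, ht, rfl⟩ : ∃ t : ℚ, 0 ≤ t ∧ q = t + 2 := ⟨q - 2, by linarith, by ring⟩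
      ring_nf; positivity
    have h2 : 0 ≤ (q ^ 2 - q - 1) * q ^ 3 * (q ^ 4 - q ^ 3 - q ^ 2 - 3) := by positivity
    linarith
  · have e : 1 - 2 / q = (q - 2) / q := by field_simp
    rw [e, div_le_div_iff₀ (by linarith) hden]
    have h2 : 0 ≤ q * (q ^ 3 + 2 * q + 2) := by positivity
    linarith
end

section
/- Let F be a finite field with q elements, let n and k be positive integers, and let A ∈ M_n(F) have at most k nontrivial nilpotent blocks, i.e., rank(A) − rank(A²) ≤ k. Then the number of pairs (U, V) with U ∈ F^(k×n) and V ∈ F^(n×k) such that the minimal polynomial of A + V·U is NOT divisible by z² is at least ((q² − 2)(q² − q − 1)(q − 1) / (q⁴(q + 1))) · q^(2nk). In particular this fraction is at least 1 − 3/q. -/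
open Module in
theorem fnb_finrank_map {F X Y : Type*} [Field F] [AddCommGroup X] [Module F X]
    [AddCommGroup Y] [Module F Y] [FiniteDimensional F X] (f : X →ₗ[F] Y) (p : Submodule F X) :
    finrank F (p.map f) + finrank F (p ⊓ LinearMap.ker f : Submodule F X) = finrank F p := by
  rw [← LinearMap.finrank_range_add_finrank_ker (f.domRestrict p), LinearMap.range_domRestrict,
    LinearMap.ker_domRestrict]
  congr 1
  rw [← Submodule.map_comap_subtype p]
  exact Submodule.finrank_map_subtype_eq p _

/-- the lower bound factor -/
noncomputable def fnbP (x : ℚ) (t : ℕ) : ℚ := ∏ i ∈ Finset.range t, (1 - x ^ (i + 1))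

theorem fnbP_nonneg (x : ℚ) (h0 : 0 ≤ x) (h1 : x ≤ 1) (t : ℕ) : 0 ≤ fnbP x t :=
  Finset.prod_nonneg fun i _ => sub_nonneg.2 (pow_le_one₀ h0 h1)

theorem fnbP_le_one (x : ℚ) (h0 : 0 ≤ x) (h1 : x ≤ 1) (t : ℕ) : fnbP x t ≤ 1 :=
  Finset.prod_le_one (fun i _ => sub_nonneg.2 (pow_le_one₀ h0 h1))
    (fun i _ => by have := pow_nonneg h0 (i + 1); linarith)

theorem fnbP_succ (x : ℚ) (t : ℕ) : fnbP x (t + 1) = fnbP x t * (1 - x ^ (t + 1)) := by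
  rw [fnbP, Finset.prod_range_succ]; rfl

theorem fnbP_ge (x : ℚ) (h0 : 0 ≤ x) (h1 : x ≤ 1) (t : ℕ) : 1 - x - x ^ 2 ≤ fnbP x t := by
  have key : ∀ t, 1 - x - x ^ 2 + x ^ (t + 2) ≤ fnbP x (t + 1) := by
    intro t
    induction t with
    | zero => simp [fnbP]
    | succ t ih =>
      rw [fnbP_succ]
      have h2 : 0 ≤ 1 - x ^ (t + 1 + 1) := sub_nonneg.2 (pow_le_one₀ h0 h1)
      refine le_trans ?_ (mul_le_mul_of_nonneg_right ih h2)
      have h3 : x ^ (t + 2) ≤ x ^ 2 := pow_le_pow_of_le_one h0 h1 (by omega)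
      have h4 : 0 ≤ x ^ (t + 2) := pow_nonneg h0 _
      have : x ^ (t + 1 + 2) = x ^ (t + 2) * x := by ring
      rw [this]
      have : x ^ (t + 1 + 1) = x ^ (t + 2) := by ring
      rw [this]
      nlinarith [mul_nonneg h4 (sub_nonneg.2 h3)]
  cases t with
  | zero => simp [fnbP]; nlinarith [sq_nonneg x]
  | succ t => exact le_trans (by have := pow_nonneg h0 (t + 2); linarith) (key t)

/-- linear independence modulo a subspace -/
def fnbGood {F Y : Type*} [Field F] [AddCommGroup Y] [Module F Y] (C : Submodule F Y)
    {j : ℕ} (y : Fin j → Y) : Prop :=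
  ∀ c : Fin j → F, ∑ i, c i • y i ∈ C → c = 0

theorem fnbGood_cons {F Y : Type*} [Field F] [AddCommGroup Y] [Module F Y] (C : Submodule F Y)
    {j : ℕ} (y0 : Y) (h0 : y0 ∉ C) (y : Fin j → Y)
    (h : fnbGood (C ⊔ Submodule.span F {y0}) y) :
    fnbGood C (Fin.cons y0 y : Fin (j + 1) → Y) := by
  intro c hc
  rw [Fin.sum_univ_succ] at hc
  simp only [Fin.cons_zero, Fin.cons_succ] at hc
  have ht : (fun i => c (Fin.succ i)) = 0 := by
    apply h
    rw [Submodule.mem_sup]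
    refine ⟨_, hc, -(c 0 • y0), Submodule.neg_mem _ (Submodule.smul_mem _ _
      (Submodule.mem_span_singleton_self y0)), by abel⟩
  have ht' : ∀ i : Fin j, c i.succ = 0 := fun i => congrFun ht i
  simp only [ht', zero_smul, Finset.sum_const_zero, add_zero] at hc
  have hc0 : c 0 = 0 := by
    by_contra hne
    exact h0 ((Submodule.smul_mem_iff C hne).1 hc)
  funext i
  refine Fin.cases hc0 ht' i

open Module in
theorem fnb_count_tuples {F Y : Type*} [Field F] [Fintype F] [AddCommGroup Y] [Module F Y]
    [Finite Y] (q : ℚ) (hq : q = (Fintype.card F : ℚ)) (j : ℕ) (C : Submodule F Y)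
    (h : finrank F C + j ≤ finrank F Y) :
    fnbP q⁻¹ (finrank F Y - finrank F C) * (Nat.card Y : ℚ) ^ j ≤
      (Nat.card {y : Fin j → Y // fnbGood C y} : ℚ) := by
  have hq1 : 1 < q := by rw [hq]; exact_mod_cast Fintype.one_lt_card
  have hx0 : 0 ≤ q⁻¹ := by positivity
  have hx1 : q⁻¹ ≤ 1 := inv_le_one_of_one_le₀ hq1.le
  have hfin : Module.Finite F Y := inferInstance
  induction j generalizing C with
  | zero =>
    have : Nonempty {y : Fin 0 → Y // fnbGood C y} :=
      ⟨⟨Fin.elim0, fun c _ => Subsingleton.elim _ _⟩⟩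
    have h1 : 0 < Nat.card {y : Fin 0 → Y // fnbGood C y} := Nat.card_pos
    have h2 : (1 : ℚ) ≤ (Nat.card {y : Fin 0 → Y // fnbGood C y} : ℚ) := by exact_mod_cast h1
    rw [pow_zero, mul_one]
    exact (fnbP_le_one _ hx0 hx1 _).trans h2
  | succ j ih =>
    classical
    have := Fintype.ofFinite Y
    let S := Σ y0 : {y0 : Y // y0 ∉ C},
      {y : Fin j → Y // fnbGood (C ⊔ Submodule.span F {y0.1}) y}
    let f : S → {y : Fin (j + 1) → Y // fnbGood C y} := fun s =>
      ⟨Fin.cons s.1.1 s.2.1, fnbGood_cons C s.1.1 s.1.2 s.2.1 s.2.2⟩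
    have hf : Function.Injective f := by
      rintro ⟨⟨a, ha⟩, ⟨b, hb⟩⟩ ⟨⟨a', ha'⟩, ⟨b', hb'⟩⟩ hh
      have h1 := congrArg Subtype.val hh
      simp only [f] at h1
      obtain ⟨rfl, rfl⟩ := Fin.cons_inj.1 h1
      rfl
    have hle : Nat.card S ≤ _ := Nat.card_le_card_of_injective f hf
    have hle' : (Nat.card S : ℚ) ≤ (Nat.card {y : Fin (j + 1) → Y // fnbGood C y} : ℚ) := by
      exact_mod_cast hle
    refine le_trans ?_ hle'
    rw [Nat.card_sigma]
    push_cast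
    have hstep : ∀ y0 : {y0 : Y // y0 ∉ C},
        fnbP q⁻¹ (finrank F Y - finrank F C - 1) * (Nat.card Y : ℚ) ^ j ≤
        (Nat.card {y : Fin j → Y // fnbGood (C ⊔ Submodule.span F {y0.1}) y} : ℚ) := by
      intro y0
      have hd : finrank F (C ⊔ Submodule.span F {y0.1} : Submodule F Y) = finrank F C + 1 := by
        have hinf := Submodule.finrank_sup_add_finrank_inf_eq C (Submodule.span F {y0.1})
        have hne : y0.1 ≠ 0 := fun hz => y0.2 (hz ▸ C.zero_mem)
        have hb : C ⊓ Submodule.span F {y0.1} = ⊥ := by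
          rw [← disjoint_iff, Submodule.disjoint_span_singleton' hne]
          exact y0.2
        rw [hb, finrank_bot, finrank_span_singleton hne] at hinf
        omega
      have := ih (C ⊔ Submodule.span F {y0.1}) (by omega)
      rw [hd] at this
      rwa [Nat.sub_sub]
    refine le_trans ?_ (Finset.sum_le_sum fun y0 _ => hstep y0)
    rw [Finset.sum_const, nsmul_eq_mul, Finset.card_univ]
    have hcardY : (Nat.card Y : ℚ) = q ^ finrank F Y := by
      rw [Module.natCard_eq_pow_finrank (K := F), hq, Nat.card_eq_fintype_card]; push_cast; rfl
    have hcardC : (Nat.card C : ℚ) = q ^ finrank F C := by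
      rw [Module.natCard_eq_pow_finrank (K := F), hq, Nat.card_eq_fintype_card]; push_cast; rfl
    have hcompl : (Fintype.card {y0 : Y // y0 ∉ C} : ℚ) =
        (Nat.card Y : ℚ) * (1 - q⁻¹ ^ (finrank F Y - finrank F C)) := by
      have e1 : Nat.card C + Fintype.card {y0 : Y // y0 ∉ C} = Nat.card Y := by
        rw [Nat.card_eq_fintype_card, Nat.card_eq_fintype_card]
        have := Fintype.card_subtype_compl (fun y0 : Y => y0 ∈ C)
        have h2 := Fintype.card_subtype_le (fun y0 : Y => y0 ∈ C)
        have h3 : Fintype.card C = Fintype.card {y0 : Y // y0 ∈ C} := Fintype.card_congr (Equiv.refl _)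
        omega
      have e2 : (Nat.card C : ℚ) + (Fintype.card {y0 : Y // y0 ∉ C} : ℚ) = Nat.card Y := by
        exact_mod_cast e1
      have e3 : (q : ℚ) ^ finrank F Y * q⁻¹ ^ (finrank F Y - finrank F C) = q ^ finrank F C := by
        obtain ⟨d, hd⟩ := Nat.exists_eq_add_of_le (show finrank F C ≤ finrank F Y by omega)
        rw [hd, Nat.add_sub_cancel_left, pow_add, mul_assoc, ← mul_pow,
          mul_inv_cancel₀ (by positivity), one_pow, mul_one]
      rw [hcardC, hcardY] at e2
      rw [hcardY, mul_sub, e3]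
      linarith
    rw [hcompl]
    obtain ⟨d, hd⟩ : ∃ d, finrank F Y - finrank F C = d + 1 :=
      ⟨finrank F Y - finrank F C - 1, by omega⟩
    rw [hd, fnbP_succ, Nat.add_sub_cancel]
    apply le_of_eq
    ring

open Module in
theorem fnb_count_lin {F X Y : Type*} [Field F] [Fintype F] [AddCommGroup X] [Module F X]
    [Finite X] [AddCommGroup Y] [Module F Y]
    [Finite Y] (q : ℚ) (hq : q = (Fintype.card F : ℚ)) (S : Submodule F X) (C : Submodule F Y)
    (h : finrank F C + finrank F S ≤ finrank F Y) (g : X →ₗ[F] Y) :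
    (1 - q⁻¹ - q⁻¹ ^ 2) * (Nat.card (X →ₗ[F] Y) : ℚ) ≤
      (Nat.card {f : X →ₗ[F] Y // ∀ s ∈ S, g s + f s ∈ C → s = 0} : ℚ) := by
  have hq1 : 1 < q := by rw [hq]; exact_mod_cast Fintype.one_lt_card
  have hx0 : 0 ≤ q⁻¹ := by positivity
  have hx1 : q⁻¹ ≤ 1 := inv_le_one_of_one_le₀ hq1.le
  let b := finBasis F S
  obtain ⟨T, hT⟩ := Submodule.exists_isCompl S
  let B := (b.prod (finBasis F T)).map (Submodule.prodEquivOfIsCompl S T hT)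
  have hB : ∀ i, B (Sum.inl i) = b i := fun i => by simp [B]
  let e : ((Fin (finrank F S) → Y) × (Fin (finrank F T) → Y)) ≃ (X →ₗ[F] Y) :=
    (Equiv.sumArrowEquivProdArrow _ _ _).symm.trans (B.constr F).toEquiv
  have he : ∀ p i, e p (b i) = p.1 i := by
    intro p i
    simp only [e]
    rw [← hB]
    simp only [Equiv.trans_apply, LinearEquiv.coe_toEquiv]
    rw [Basis.constr_basis]
    rfl
  let φ : {y : Fin (finrank F S) → Y // fnbGood C y} × (Fin (finrank F T) → Y) →
      {f : X →ₗ[F] Y // ∀ s ∈ S, g s + f s ∈ C → s = 0} := fun p =>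
    ⟨e (p.1.1, p.2) - g, by
      intro s hs hsC
      rw [LinearMap.sub_apply, add_sub_cancel] at hsC
      have hrep : s = ∑ i, b.repr ⟨s, hs⟩ i • (b i : X) := by
        have := congrArg Subtype.val (b.sum_repr ⟨s, hs⟩)
        rw [Submodule.coe_sum] at this
        exact this.symm
      rw [hrep, map_sum] at hsC
      simp only [map_smul, he] at hsC
      have hz := p.1.2 _ hsC
      rw [hrep]
      refine Finset.sum_eq_zero fun i _ => ?_
      rw [congrFun hz i]; simp⟩
  have hφ : Function.Injective φ := by
    rintro ⟨⟨a, ha⟩, c⟩ ⟨⟨a', ha'⟩, c'⟩ hh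
    have h1 := congrArg Subtype.val hh
    simp only [φ, sub_left_inj, EmbeddingLike.apply_eq_iff_eq, Prod.mk.injEq] at h1
    obtain ⟨rfl, rfl⟩ := h1
    rfl
  have : Finite (X →ₗ[F] Y) := Finite.of_equiv _ e
  have hle := Nat.card_le_card_of_injective φ hφ
  rw [Nat.card_prod] at hle
  have hle' : (Nat.card {y : Fin (finrank F S) → Y // fnbGood C y} : ℚ) *
    (Nat.card (Fin (finrank F T) → Y) : ℚ) ≤ 
    (Nat.card {f : X →ₗ[F] Y // ∀ s ∈ S, g s + f s ∈ C → s = 0} : ℚ) := by exact_mod_cast hle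
  refine le_trans ?_ hle'
  have hc : (Nat.card (X →ₗ[F] Y) : ℚ) = (Nat.card Y : ℚ) ^ finrank F S *
      (Nat.card (Fin (finrank F T) → Y) : ℚ) := by
    rw [← Nat.card_congr e, Nat.card_prod, Nat.card_fun (α := Fin _)]
    simp
  rw [hc, ← mul_assoc]
  refine mul_le_mul_of_nonneg_right ?_ (by positivity)
  refine le_trans ?_ (fnb_count_tuples q hq (finrank F S) C h)
  exact mul_le_mul_of_nonneg_right (fnbP_ge _ hx0 hx1 _) (by positivity)

theorem fnb_minpoly {F : Type*} [Field F] {n : ℕ} (B : Matrix (Fin n) (Fin n) F)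
    (h : ∀ x, B.mulVec (B.mulVec x) = 0 → B.mulVec x = 0) :
    ¬ (Polynomial.X ^ 2 ∣ minpoly F B) := by
  rintro ⟨p, hp⟩
  have hint : IsIntegral F B := Algebra.IsIntegral.isIntegral B
  have hne : minpoly F B ≠ 0 := minpoly.ne_zero hint
  have h0 := minpoly.aeval F B
  rw [hp] at h0
  have hp0 : p ≠ 0 := by rintro rfl; exact hne (by rw [hp, mul_zero])
  have h1 : Polynomial.aeval B (Polynomial.X * p) = 0 := by
    simp only [map_mul, map_pow, Polynomial.aeval_X] at h0 ⊢
    apply Matrix.mulVec_injective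
    funext x
    rw [← Matrix.mulVec_mulVec, Matrix.zero_mulVec]
    apply h
    rw [Matrix.mulVec_mulVec, Matrix.mulVec_mulVec, ← pow_two, h0, Matrix.zero_mulVec]
  have h2 := minpoly.dvd F B h1
  have h3 := Polynomial.natDegree_le_of_dvd h2 (mul_ne_zero Polynomial.X_ne_zero hp0)
  rw [hp, Polynomial.natDegree_mul (pow_ne_zero _ Polynomial.X_ne_zero) hp0,
    Polynomial.natDegree_mul Polynomial.X_ne_zero hp0] at h3
  simp at h3

open Module in
theorem fnb_count_v {F X Y : Type*} [Field F] [Fintype F] [AddCommGroup X] [Module F X]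
    [Finite X] [AddCommGroup Y] [Module F Y] [Finite Y] (q : ℚ) (hq : q = (Fintype.card F : ℚ))
    (a : Y →ₗ[F] Y) (u : Y →ₗ[F] X)
    (hu : ∀ y ∈ LinearMap.ker a ⊓ LinearMap.range a, u y = 0 → y = 0) :
    (1 - q⁻¹ - q⁻¹ ^ 2) * (Nat.card (X →ₗ[F] Y) : ℚ) ≤
      (Nat.card {v : X →ₗ[F] Y // ∀ x, (a + v ∘ₗ u) ((a + v ∘ₗ u) x) = 0 →
        (a + v ∘ₗ u) x = 0} : ℚ) := by
  obtain ⟨σ₀, hσ₀⟩ := u.rangeRestrict.exists_rightInverse_of_surjective u.range_rangeRestrict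
  obtain ⟨σ, hσ⟩ := LinearMap.exists_extend σ₀
  have hσu : ∀ x, u (σ (u x)) = u x := by
    intro x
    have h1 : σ (u x) = σ₀ ⟨u x, LinearMap.mem_range_self u x⟩ := by
      rw [← hσ]; rfl
    rw [h1]
    have := congrArg Subtype.val (LinearMap.congr_fun hσ₀ ⟨u x, LinearMap.mem_range_self u x⟩)
    simpa using this
  let K := LinearMap.ker u
  let C : Submodule F Y := K.map a ⊔ (K ⊓ LinearMap.ker a)
  have hdim : finrank F C + finrank F (LinearMap.range u) ≤ finrank F Y := by
    have h1 := fnb_finrank_map a K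
    have h2 := LinearMap.finrank_range_add_finrank_ker u
    have h3 : finrank F C ≤ finrank F (K.map a) +
      finrank F (K ⊓ LinearMap.ker a : Submodule F Y) := Submodule.finrank_add_le_finrank_add_finrank _ _
    have h4 : finrank F K = finrank F (LinearMap.ker u) := rfl
    omega
  refine (fnb_count_lin q hq (LinearMap.range u) C hdim (a ∘ₗ σ)).trans ?_
  have : Finite (X →ₗ[F] Y) := Finite.of_injective (fun f => (f : X → Y)) DFunLike.coe_injective
  norm_cast
  apply Nat.card_le_card_of_injective (Subtype.map id ?_) (Subtype.map_injective _ Function.injective_id)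
  intro v hv
  simp only [id]
  have key : ∀ x, (a + v ∘ₗ u) x ∈ C → u x = 0 := by
    intro x hx
    apply hv (u x) (LinearMap.mem_range_self u x)
    have h1 : a (x - σ (u x)) ∈ C := by
      apply Submodule.mem_sup_left
      apply Submodule.mem_map_of_mem
      simp [K, hσu]
    have h2 := C.sub_mem hx h1
    have h3 : (a + v ∘ₗ u) x - a (x - σ (u x)) = (a ∘ₗ σ) (u x) + v (u x) := by
      simp only [LinearMap.add_apply, LinearMap.comp_apply, map_sub]; abel
    rwa [h3] at h2
  intro x hx
  set y := (a + v ∘ₗ u) x with hy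
  have huy : u y = 0 := key y (by rw [hx]; exact C.zero_mem)
  have hay : a y = 0 := by
    simpa [huy] using hx
  have hux : u x = 0 := key x (Submodule.mem_sup_right ⟨huy, hay⟩)
  have hyx : y = a x := by rw [hy]; simp [hux]
  exact hu y ⟨hay, hyx ▸ LinearMap.mem_range_self a x⟩ huy

open Module in
theorem fnb_count_pairs {F X Y : Type*} [Field F] [Fintype F] [AddCommGroup X] [Module F X]
    [Finite X] [AddCommGroup Y] [Module F Y] [Finite Y] (q : ℚ) (hq : q = (Fintype.card F : ℚ))
    (a : Y →ₗ[F] Y)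
    (ha : finrank F (LinearMap.ker a ⊓ LinearMap.range a : Submodule F Y) ≤ finrank F X) :
    (1 - q⁻¹ - q⁻¹ ^ 2) ^ 2 * ((Nat.card (Y →ₗ[F] X) : ℚ) * (Nat.card (X →ₗ[F] Y) : ℚ)) ≤
      (Nat.card {p : (Y →ₗ[F] X) × (X →ₗ[F] Y) //
        ∀ x, (a + p.2 ∘ₗ p.1) ((a + p.2 ∘ₗ p.1) x) = 0 → (a + p.2 ∘ₗ p.1) x = 0} : ℚ) := by
  classical
  have : Finite (X →ₗ[F] Y) := Finite.of_injective (fun f => (f : X → Y)) DFunLike.coe_injective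
  have : Finite (Y →ₗ[F] X) := Finite.of_injective (fun f => (f : Y → X)) DFunLike.coe_injective
  have := Fintype.ofFinite (Y →ₗ[F] X)
  have hq2 : 2 ≤ q := by
    rw [hq]; exact_mod_cast (Fintype.one_lt_card : 1 < Fintype.card F)
  have hx0 : 0 ≤ q⁻¹ := by positivity
  have hx1 : q⁻¹ ≤ 1 / 2 := by
    rw [one_div]; exact inv_anti₀ (by norm_num) hq2
  have hpos : 0 ≤ 1 - q⁻¹ - q⁻¹ ^ 2 := by nlinarith
  let R : Submodule F Y := LinearMap.ker a ⊓ LinearMap.range a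
  have hU := fnb_count_lin q hq R (⊥ : Submodule F X) (by rw [finrank_bot, zero_add]; exact ha) 0
  let G := {f : Y →ₗ[F] X // ∀ s ∈ R, (0 : Y →ₗ[F] X) s + f s ∈ (⊥ : Submodule F X) → s = 0}
  let P := fun (u : Y →ₗ[F] X) => {v : X →ₗ[F] Y // ∀ x, (a + v ∘ₗ u) ((a + v ∘ₗ u) x) = 0 →
        (a + v ∘ₗ u) x = 0}
  let f : (Σ u : G, P u.1) → {p : (Y →ₗ[F] X) × (X →ₗ[F] Y) //
        ∀ x, (a + p.2 ∘ₗ p.1) ((a + p.2 ∘ₗ p.1) x) = 0 → (a + p.2 ∘ₗ p.1) x = 0} :=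
    fun s => ⟨(s.1.1, s.2.1), s.2.2⟩
  have hf : Function.Injective f := by
    rintro ⟨⟨u, hu⟩, ⟨v, hv⟩⟩ ⟨⟨u', hu'⟩, ⟨v', hv'⟩⟩ hh
    have h1 := congrArg Subtype.val hh
    simp only [f, Prod.mk.injEq] at h1
    obtain ⟨rfl, rfl⟩ := h1
    rfl
  have hle := Nat.card_le_card_of_injective f hf
  refine le_trans ?_ (Nat.cast_le.2 hle)
  have : Fintype G := Fintype.ofFinite G
  rw [Nat.card_sigma]
  push_cast
  have hstep : ∀ u : G, (1 - q⁻¹ - q⁻¹ ^ 2) * (Nat.card (X →ₗ[F] Y) : ℚ) ≤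
      (Nat.card (P u.1) : ℚ) := by
    intro u
    apply fnb_count_v q hq a u.1
    intro y hy huy
    exact u.2 y hy (by simp [huy])
  refine le_trans ?_ (Finset.sum_le_sum fun u _ => hstep u)
  rw [Finset.sum_const, nsmul_eq_mul, Finset.card_univ, ← Nat.card_eq_fintype_card]
  have := mul_le_mul_of_nonneg_right hU
    (mul_nonneg hpos (Nat.cast_nonneg (Nat.card (X →ₗ[F] Y)) : (0 : ℚ) ≤ _))
  refine le_trans (le_of_eq ?_) this
  ring


/-- if `A` has at most `k` nontrivial nilpotent blocks
(i.e. `rank A - rank A² ≤ k`), then the number of pairs `(U, V)` such that the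
minimal polynomial of `A + V·U` is not divisible by `z²` is at least
`((q² - 2)(q² - q - 1)(q - 1) / (q⁴(q + 1))) · q^(2nk)`, and this fraction is at
least `1 - 3/q`. -/
theorem few_nilpotent_blocks_precondition_count
    {F : Type*} [Field F] [Fintype F] (n k : ℕ) (hn : 0 < n) (hk : 0 < k)
    (q : ℚ) (hq : q = (Fintype.card F : ℚ))
    (A : Matrix (Fin n) (Fin n) F) (hA : A.rank - (A * A).rank ≤ k) :
    ((q ^ 2 - 2) * (q ^ 2 - q - 1) * (q - 1) / (q ^ 4 * (q + 1))) * q ^ (2 * n * k) ≤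
      (Nat.card {p : Matrix (Fin k) (Fin n) F × Matrix (Fin n) (Fin k) F //
        ¬ (Polynomial.X ^ 2 ∣ minpoly F (A + p.2 * p.1))} : ℚ) ∧
    1 - 3 / q ≤ (q ^ 2 - 2) * (q ^ 2 - q - 1) * (q - 1) / (q ^ 4 * (q + 1)) := by
  have hq2 : 2 ≤ q := by
    rw [hq]; exact_mod_cast (Fintype.one_lt_card : 1 < Fintype.card F)
  have hq0 : 0 < q := by linarith
  constructor
  · have ha : Module.finrank F (LinearMap.ker A.mulVecLin ⊓ LinearMap.range A.mulVecLin :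
        Submodule F (Fin n → F)) ≤ Module.finrank F (Fin k → F) := by
      have h1 := fnb_finrank_map A.mulVecLin (LinearMap.range A.mulVecLin)
      have h2 : (A * A).rank =
          Module.finrank F ((LinearMap.range A.mulVecLin).map A.mulVecLin) := by
        rw [Matrix.rank, Matrix.mulVecLin_mul, LinearMap.range_comp]
      have h3 : A.rank = Module.finrank F (LinearMap.range A.mulVecLin) := rfl
      rw [Module.finrank_fin_fun, inf_comm]
      omega
    have main := fnb_count_pairs q hq A.mulVecLin ha
    have c1 : (Nat.card ((Fin n → F) →ₗ[F] (Fin k → F)) : ℚ) = q ^ (n * k) := by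
      rw [← Nat.card_congr (Matrix.toLin' (R := F) (m := Fin k) (n := Fin n)).toEquiv, hq,
        ← Nat.card_congr (Matrix.of (m := Fin k) (n := Fin n) (α := F)), Nat.card_fun,
        Nat.card_fun, Nat.card_fin, Nat.card_fin, Nat.card_eq_fintype_card, ← pow_mul]
      push_cast
      rfl
    have c2 : (Nat.card ((Fin k → F) →ₗ[F] (Fin n → F)) : ℚ) = q ^ (n * k) := by
      rw [← Nat.card_congr (Matrix.toLin' (R := F) (m := Fin n) (n := Fin k)).toEquiv, hq,
        ← Nat.card_congr (Matrix.of (m := Fin n) (n := Fin k) (α := F)), Nat.card_fun,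
        Nat.card_fun, Nat.card_fin, Nat.card_fin, Nat.card_eq_fintype_card, ← pow_mul, mul_comm k n]
      push_cast
      ring
    rw [c1, c2, ← pow_add, show n * k + n * k = 2 * n * k by ring] at main
    have hinj : Nat.card {p : ((Fin n → F) →ₗ[F] (Fin k → F)) × ((Fin k → F) →ₗ[F] (Fin n → F)) //
        ∀ x, (A.mulVecLin + p.2 ∘ₗ p.1) ((A.mulVecLin + p.2 ∘ₗ p.1) x) = 0 →
          (A.mulVecLin + p.2 ∘ₗ p.1) x = 0} ≤
        Nat.card {p : Matrix (Fin k) (Fin n) F × Matrix (Fin n) (Fin k) F //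
        ¬ (Polynomial.X ^ 2 ∣ minpoly F (A + p.2 * p.1))} := by
      refine Nat.card_le_card_of_injective (Subtype.map
        (Prod.map (LinearMap.toMatrix' (R := F)) (LinearMap.toMatrix' (R := F))) ?_)
        (Subtype.map_injective _ (Function.Injective.prodMap
          (LinearEquiv.injective _) (LinearEquiv.injective _)))
      rintro ⟨u, v⟩ huv
      apply fnb_minpoly
      have hB : ∀ x, (A + LinearMap.toMatrix' v * LinearMap.toMatrix' u).mulVec x =
          (A.mulVecLin + v ∘ₗ u) x := by
        intro x
        rw [Matrix.add_mulVec, ← Matrix.mulVec_mulVec, LinearMap.toMatrix'_mulVec,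
          LinearMap.toMatrix'_mulVec]
        rfl
      intro x hx
      simp only [Prod.map] at hx ⊢
      rw [hB, hB] at hx
      rw [hB]
      exact huv x hx
    refine le_trans ?_ (main.trans (Nat.cast_le.2 hinj))
    refine mul_le_mul_of_nonneg_right ?_ (by positivity)
    have e : (1 - q⁻¹ - q⁻¹ ^ 2) ^ 2 = (q ^ 2 - q - 1) ^ 2 * (q + 1) / (q ^ 4 * (q + 1)) := by
      field_simp
    rw [e]
    refine div_le_div_of_nonneg_right ?_ (by positivity)
    have h5 : 0 ≤ q ^ 2 - q - 1 := by nlinarith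
    have h6 : (q ^ 2 - 2) * (q - 1) ≤ (q ^ 2 - q - 1) * (q + 1) := by nlinarith
    nlinarith [mul_le_mul_of_nonneg_left h6 h5]
  · rw [le_div_iff₀ (by positivity)]
    have e : (1 - 3 / q) * (q ^ 4 * (q + 1)) = (q - 3) * q ^ 3 * (q + 1) := by
      field_simp
    rw [e]
    nlinarith [pow_pos hq0 3, pow_pos hq0 2, mul_nonneg (sub_nonneg.2 hq2) (sub_nonneg.2 hq2), mul_nonneg (pow_pos hq0 2).le (sub_nonneg.2 hq2)]
end

section
/- Let F be a finite field with q elements, let n be a positive integer, let A ∈ M_n(F), let f ∈ F[z] be a monic irreducible polynomial of degree d, and let ℓ be a positive integer such that exactly ℓ of the invariant factors of A are divisible by f, i.e., n − rank(f(A)) = ℓ·d. Consider rank-one updates A + v·uᵀ for column vectors v ∈ F^n and u ∈ F^n. Then: (1) the number of pairs (v, u) ∈ F^n × F^n such that exactly ℓ−1 of the invariant factors of A + v·uᵀ are divisible by f (i.e., n − rank(f(A + v·uᵀ)) = (ℓ−1)·d) is at least (1 − q^(−ℓd))² · q^(2n); (2) the number of pairs such that exactly ℓ+1 of the invariant factors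 of A + v·uᵀ are divisible by f (i.e., n − rank(f(A + v·uᵀ)) = (ℓ+1)·d) is at most q^(−2ℓd) · q^(2n); (3) for every pair (v, u), the number of invariant factors of A + v·uᵀ divisible by f lies in {ℓ−1, ℓ, ℓ+1}, i.e., n − rank(f(A + v·uᵀ)) ∈ {(ℓ−1)·d, ℓ·d, (ℓ+1)·d}. -/
open Polynomial Matrix

theorem aux_key {F : Type*} [Field F] {n : ℕ} (f : Polynomial F) [Fact (Irreducible f)]
    (M : Matrix (Fin n) (Fin n) F) :
    n - (aeval M f).rank = f.natDegree *
      (n - (M.map (algebraMap F (AdjoinRoot f)) - Matrix.scalar (Fin n) (AdjoinRoot.root f)).rank) ∧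
    ∀ v : Fin n → F, v ∈ LinearMap.range (aeval M f).mulVecLin ↔
      ∀ y : Fin n → AdjoinRoot f,
        (M.map (algebraMap F (AdjoinRoot f)) - Matrix.scalar (Fin n) (AdjoinRoot.root f))ᵀ *ᵥ y = 0 →
        y ⬝ᵥ (fun i => algebraMap F (AdjoinRoot f) (v i)) = 0 := by
  classical
  have hf0 : f ≠ 0 := (Fact.out : Irreducible f).ne_zero
  set T : Module.End F (Fin n → F) := Matrix.toLinAlgEquiv' M with hT
  have hTf : aeval T f = (aeval M f).mulVecLin := by
    rw [hT]
    exact (Polynomial.aeval_algHom_apply (Matrix.toLinAlgEquiv' (R := F) (n := Fin n)).toAlgHom M f)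
  set P : Submodule F (Fin n → F) := LinearMap.range (aeval M f).mulVecLin with hP
  have hPT : P ≤ P.comap T := by
    rintro _ ⟨x, rfl⟩
    refine ⟨T x, ?_⟩
    rw [← hTf]
    have : Commute (aeval T f) T := by
      have h := Commute.all f (X : F[X])
      have h2 := h.map (aeval T)
      rwa [aeval_X] at h2
    exact congrArg (fun g : Module.End F (Fin n → F) => g x) this.eq
  let S : Module.End F ((Fin n → F) ⧸ P) := P.mapQ P T hPT
  have hSg : ∀ (g : F[X]) (x : Fin n → F), aeval S g (P.mkQ x) = P.mkQ (aeval T g x) := by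
    intro g
    induction g using Polynomial.induction_on' with
    | add p q hp hq => intro x; simp only [map_add, LinearMap.add_apply, hp, hq]
    | monomial k a =>
      intro x
      simp only [aeval_monomial, Module.End.mul_apply, Module.algebraMap_end_apply, map_smul]
      congr 1
      induction k generalizing x with
      | zero => rfl
      | succ k ih => 
        rw [pow_succ, pow_succ, Module.End.mul_apply, Module.End.mul_apply, ← ih]
        rfl
  have hSf : aeval S f = 0 := by
    apply LinearMap.ext
    intro w
    obtain ⟨x, rfl⟩ := P.mkQ_surjective w
    rw [hSg, hTf, LinearMap.zero_apply, Submodule.mkQ_apply, Submodule.Quotient.mk_eq_zero]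
    exact ⟨x, rfl⟩
  let φ : AdjoinRoot f →ₐ[F] Module.End F ((Fin n → F) ⧸ P) :=
    Ideal.Quotient.liftₐ (Ideal.span {f}) (aeval S) (by
      intro a ha
      obtain ⟨b, rfl⟩ := Ideal.mem_span_singleton.mp ha
      rw [map_mul, hSf, zero_mul])
  have hφ : ∀ p : F[X], φ (AdjoinRoot.mk f p) = aeval S p := fun p => rfl
  let _ : Module (AdjoinRoot f) ((Fin n → F) ⧸ P) := Module.compHom _ φ.toRingHom
  have hsm : ∀ (k : AdjoinRoot f) (w : (Fin n → F) ⧸ P), k • w = φ k w := fun _ _ => rfl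
  have : IsScalarTower F (AdjoinRoot f) ((Fin n → F) ⧸ P) := ⟨fun a k w => by
    rw [hsm, hsm, map_smul]; rfl⟩
  have hroot : ∀ x : Fin n → F, AdjoinRoot.root f • P.mkQ x = P.mkQ (M *ᵥ x) := by
    intro x
    rw [hsm]
    have : φ (AdjoinRoot.root f) = S := (hφ X).trans (aeval_X S)
    rw [this]; rfl
  have hfinF : Module.Finite F (AdjoinRoot f) := (AdjoinRoot.powerBasis hf0).finite
  have : Module.Finite (AdjoinRoot f) ((Fin n → F) ⧸ P) := Module.Finite.of_restrictScalars_finite F _ _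
  have hd : Module.finrank F (AdjoinRoot f) = f.natDegree := by
    rw [(AdjoinRoot.powerBasis hf0).finrank, AdjoinRoot.powerBasis_dim]
  set α := AdjoinRoot.root f
  set B := (M.map (algebraMap F (AdjoinRoot f)) - Matrix.scalar (Fin n) α) with hB
  have hev : ∀ (ψ : Module.Dual (AdjoinRoot f) ((Fin n → F) ⧸ P)) (v : Fin n → F),
      ψ (P.mkQ v) = (fun i => ψ (P.mkQ (Pi.single i 1))) ⬝ᵥ
        (fun i => algebraMap F (AdjoinRoot f) (v i)) := by
    intro ψ v
    conv_lhs => rw [pi_eq_sum_univ' v]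
    rw [map_sum, map_sum, dotProduct]
    refine Finset.sum_congr rfl fun i _ => ?_
    rw [map_smul, ← algebraMap_smul (AdjoinRoot f) (v i), map_smul, smul_eq_mul, mul_comm]
  have hBT : ∀ (y : Fin n → AdjoinRoot f) , Bᵀ *ᵥ y = 0 ↔ ∀ j,
      y ⬝ᵥ (fun i => algebraMap F (AdjoinRoot f) (M i j)) = α * y j := by
    intro y
    rw [funext_iff]
    refine forall_congr' fun j => ?_
    rw [hB, Matrix.mulVec_transpose, Matrix.vecMul_sub]
    simp only [Pi.sub_apply, Pi.zero_apply, sub_eq_zero, Matrix.scalar_apply, Matrix.vecMul_diagonal]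
    rw [mul_comm]; rfl
  let E : Module.Dual (AdjoinRoot f) ((Fin n → F) ⧸ P) →ₗ[AdjoinRoot f] (Fin n → AdjoinRoot f) :=
    { toFun := fun ψ i => ψ (P.mkQ (Pi.single i 1))
      map_add' := fun _ _ => rfl
      map_smul' := fun _ _ => rfl }
  have hE : ∀ ψ v, ψ (P.mkQ v) = E ψ ⬝ᵥ (fun i => algebraMap F (AdjoinRoot f) (v i)) := hev
  have hEinj : Function.Injective E := by
    intro ψ₁ ψ₂ h
    apply LinearMap.ext
    intro w
    obtain ⟨x, rfl⟩ := P.mkQ_surjective w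
    rw [hE, hE, h]
  have hErange : LinearMap.range E = LinearMap.ker Bᵀ.mulVecLin := by
    ext y
    rw [LinearMap.mem_ker, Matrix.mulVecLin_apply, hBT]
    constructor
    · rintro ⟨ψ, rfl⟩ j
      have h1 := hE ψ (M *ᵥ Pi.single j 1)
      rw [← hroot, map_smul, smul_eq_mul] at h1
      simp only [mulVec_single_one, col_apply] at h1
      exact h1.symm
    · intro hy
      let g : (Fin n → F) →ₗ[F] AdjoinRoot f :=
        { toFun := fun v => y ⬝ᵥ (fun i => algebraMap F (AdjoinRoot f) (v i))
          map_add' := fun v w => by simp [dotProduct, mul_add, Finset.sum_add_distrib]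
          map_smul' := fun c v => by
            simp only [dotProduct, Pi.smul_apply, smul_eq_mul, map_mul, RingHom.id_apply,
              Algebra.smul_def, Finset.mul_sum]
            exact Finset.sum_congr rfl fun i _ => by ring }
      have hgs : ∀ i, g (Pi.single i 1) = y i := by
        intro i
        change y ⬝ᵥ (fun j => algebraMap F (AdjoinRoot f) ((Pi.single i 1 : Fin n → F) j)) = y i
        simp [dotProduct, Pi.single_apply, apply_ite]
      have hgT : ∀ x, g (T x) = α * g x := by
        have : g ∘ₗ T = (LinearMap.mulLeft F α) ∘ₗ g := by
          apply LinearMap.pi_ext'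
          intro j
          ext
          simp only [LinearMap.comp_apply, LinearMap.single_apply, LinearMap.mulLeft_apply, hgs]
          rw [← hy j]
          change y ⬝ᵥ (fun i => algebraMap F (AdjoinRoot f) ((M *ᵥ Pi.single j 1) i)) = _
          simp
        intro x
        exact LinearMap.congr_fun this x
      have hgp : ∀ (p : F[X]) x, g (aeval T p x) = aeval α p * g x := by
        intro p
        induction p using Polynomial.induction_on' with
        | add p q hp hq => intro x; simp only [map_add, LinearMap.add_apply, hp, hq, add_mul]
        | monomial k a =>
          intro x
          simp only [aeval_monomial, Module.End.mul_apply, Module.algebraMap_end_apply, map_smul, mul_assoc]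
          rw [Algebra.smul_def]
          congr 1
          induction k generalizing x with
          | zero => simp
          | succ k ih => rw [pow_succ, Module.End.mul_apply, ih, hgT, pow_succ, mul_assoc]
      have hgP : P ≤ LinearMap.ker g := by
        rintro _ ⟨x, rfl⟩
        rw [← hTf, LinearMap.mem_ker, hgp]
        simp [α]
      let G := P.liftQ g hgP
      have hG : ∀ x, G (P.mkQ x) = g x := fun x => by simp [G]
      have hGs : ∀ (k : AdjoinRoot f) w, G (k • w) = k * G w := by
        intro k w
        obtain ⟨x, rfl⟩ := P.mkQ_surjective w
        obtain ⟨p, rfl⟩ := AdjoinRoot.mk_surjective k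
        rw [hsm, hφ, hSg, hG, hG, hgp, AdjoinRoot.aeval_eq]
      refine ⟨{ toFun := G, map_add' := map_add G, map_smul' := hGs }, ?_⟩
      funext i
      exact (hG _).trans (hgs i)
  constructor
  · have h1 : Module.finrank (AdjoinRoot f) (LinearMap.ker Bᵀ.mulVecLin) =
        Module.finrank (AdjoinRoot f) ((Fin n → F) ⧸ P) := by
      rw [← hErange, LinearMap.finrank_range_of_inj hEinj, Subspace.dual_finrank_eq]
    have h2 := Module.finrank_mul_finrank F (AdjoinRoot f) ((Fin n → F) ⧸ P)
    have h3 := P.finrank_quotient_add_finrank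
    have h4 := LinearMap.finrank_range_add_finrank_ker Bᵀ.mulVecLin
    have h5 : Module.finrank (AdjoinRoot f) (LinearMap.range Bᵀ.mulVecLin) = B.rank := by
      rw [← Matrix.rank_transpose B]; rfl
    have h6 : Module.finrank F P = (aeval M f).rank := rfl
    rw [Module.finrank_fin_fun] at h3 h4
    rw [hd] at h2
    rw [← h6, show n - B.rank = Module.finrank (AdjoinRoot f) ((Fin n → F) ⧸ P) by omega, h2]
    omega
  · intro v
    rw [show v ∈ P ↔ P.mkQ v = 0 by simp, ← Module.forall_dual_apply_eq_zero_iff (AdjoinRoot f)]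
    constructor
    · intro h y hy
      have : y ∈ LinearMap.range E := by rw [hErange]; exact hy
      obtain ⟨ψ, rfl⟩ := this
      rw [← hE]; exact h ψ
    · intro h ψ
      rw [hE]
      apply h
      have : E ψ ∈ LinearMap.ker Bᵀ.mulVecLin := by rw [← hErange]; exact ⟨ψ, rfl⟩
      exact this

theorem aux_ker {K : Type*} [Field K] {n : ℕ} (B : Matrix (Fin n) (Fin n) K) (v u y : Fin n → K)
    (hy : Bᵀ *ᵥ y = 0) (hyv : y ⬝ᵥ v ≠ 0) (z : Fin n → K)
    (hz : (B + vecMulVec v u) *ᵥ z = 0) : B *ᵥ z = 0 ∧ u ⬝ᵥ z = 0 := by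
  have h1 : B *ᵥ z + (u ⬝ᵥ z) • v = 0 := by
    rw [← hz, add_mulVec, vecMulVec_mulVec]; simp
  have h2 : u ⬝ᵥ z = 0 := by
    have := congrArg (fun w => y ⬝ᵥ w) h1
    simp only [dotProduct_add, dotProduct_smul, dotProduct_zero, dotProduct_mulVec,
      ← mulVec_transpose, hy, zero_dotProduct, zero_add, smul_eq_mul] at this
    exact (mul_eq_zero.mp this).resolve_right hyv
  refine ⟨?_, h2⟩
  simpa [h2] using h1

theorem aux_le {K : Type*} [Field K] {n : ℕ} (B : Matrix (Fin n) (Fin n) K) (v u y : Fin n → K)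
    (hy : Bᵀ *ᵥ y = 0) (hyv : y ⬝ᵥ v ≠ 0) : B.rank ≤ (B + vecMulVec v u).rank := by
  have h1 := LinearMap.finrank_range_add_finrank_ker B.mulVecLin
  have h2 := LinearMap.finrank_range_add_finrank_ker (B + vecMulVec v u).mulVecLin
  have h3 : LinearMap.ker (B + vecMulVec v u).mulVecLin ≤ LinearMap.ker B.mulVecLin :=
    fun z hz => (aux_ker B v u y hy hyv z hz).1
  have h4 := Submodule.finrank_mono h3
  simp only [Matrix.rank]
  omega

theorem aux_lt {K : Type*} [Field K] {n : ℕ} (B : Matrix (Fin n) (Fin n) K) (v u y x : Fin n → K)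
    (hy : Bᵀ *ᵥ y = 0) (hyv : y ⬝ᵥ v ≠ 0) (hx : B *ᵥ x = 0) (hxu : x ⬝ᵥ u ≠ 0) :
    B.rank < (B + vecMulVec v u).rank := by
  have h1 := LinearMap.finrank_range_add_finrank_ker B.mulVecLin
  have h2 := LinearMap.finrank_range_add_finrank_ker (B + vecMulVec v u).mulVecLin
  have h3 : LinearMap.ker (B + vecMulVec v u).mulVecLin < LinearMap.ker B.mulVecLin := by
    refine lt_of_le_of_ne (fun z hz => (aux_ker B v u y hy hyv z hz).1) fun h => hxu ?_
    have : x ∈ LinearMap.ker (B + vecMulVec v u).mulVecLin := by rw [h]; exact hx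
    rw [dotProduct_comm]
    exact (aux_ker B v u y hy hyv x this).2
  have h4 := Submodule.finrank_lt_finrank_of_lt h3
  simp only [Matrix.rank]
  omega

theorem aux_rank_add {K : Type*} [Field K] {n : ℕ} (B C : Matrix (Fin n) (Fin n) K) :
    (B + C).rank ≤ B.rank + C.rank := by
  refine le_trans (Submodule.finrank_mono ?_)
    (Submodule.finrank_add_le_finrank_add_finrank (LinearMap.range B.mulVecLin)
      (LinearMap.range C.mulVecLin))
  rintro _ ⟨x, rfl⟩
  rw [mulVecLin_add, LinearMap.add_apply]
  exact Submodule.add_mem_sup ⟨x, rfl⟩ ⟨x, rfl⟩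

theorem aux_near {K : Type*} [Field K] {n : ℕ} (B : Matrix (Fin n) (Fin n) K) (v u : Fin n → K) :
    (B + vecMulVec v u).rank ≤ B.rank + 1 ∧ B.rank ≤ (B + vecMulVec v u).rank + 1 := by
  constructor
  · exact (aux_rank_add _ _).trans (by have := rank_vecMulVec_le v u; omega)
  · have h : B = (B + vecMulVec v u) + vecMulVec (-v) u := by simp [neg_vecMulVec]
    conv_lhs => rw [h]
    exact (aux_rank_add _ _).trans (by have := rank_vecMulVec_le (-v) u; omega)

theorem aux_aeval_transpose {F : Type*} [Field F] {n : ℕ} (f : Polynomial F)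
    (M : Matrix (Fin n) (Fin n) F) : aeval Mᵀ f = (aeval M f)ᵀ := by
  induction f using Polynomial.induction_on' with
  | add p q hp hq => simp [hp, hq]
  | monomial k a => simp [aeval_monomial, ← Algebra.smul_def, transpose_pow]

theorem aux_card {F : Type*} [Field F] [Fintype F] {n : ℕ} (M : Matrix (Fin n) (Fin n) F) :
    Nat.card (LinearMap.range M.mulVecLin) = Fintype.card F ^ M.rank := by
  rw [Module.natCard_eq_pow_finrank (K := F), Nat.card_eq_fintype_card]; rfl
theorem rank_one_update_invariant_factor_counts
    {F : Type*} [Field F] [Fintype F] (n d ℓ : ℕ) (hℓ : 0 < ℓ)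
    (q : ℚ) (hq : q = (Fintype.card F : ℚ))
    (A : Matrix (Fin n) (Fin n) F) (f : Polynomial F)
    (hmonic : f.Monic) (hirr : Irreducible f) (hdeg : f.natDegree = d)
    (hinv : n - (Polynomial.aeval A f).rank = ℓ * d) :
    (1 - 1 / q ^ (ℓ * d)) ^ 2 * q ^ (2 * n) ≤
      (Nat.card {p : (Fin n → F) × (Fin n → F) //
        n - (Polynomial.aeval (A + Matrix.vecMulVec p.1 p.2) f).rank = (ℓ - 1) * d} : ℚ) ∧
    (Nat.card {p : (Fin n → F) × (Fin n → F) //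
        n - (Polynomial.aeval (A + Matrix.vecMulVec p.1 p.2) f).rank = (ℓ + 1) * d} : ℚ) ≤
      q ^ (2 * n) / q ^ (2 * (ℓ * d)) ∧
    ∀ v u : Fin n → F,
      n - (Polynomial.aeval (A + Matrix.vecMulVec v u) f).rank = (ℓ - 1) * d ∨
      n - (Polynomial.aeval (A + Matrix.vecMulVec v u) f).rank = ℓ * d ∨
      n - (Polynomial.aeval (A + Matrix.vecMulVec v u) f).rank = (ℓ + 1) * d := by
  classical
  have : Fact (Irreducible f) := ⟨hirr⟩
  have hd : 0 < d := hdeg ▸ hirr.natDegree_pos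
  set ι := algebraMap F (AdjoinRoot f) with hι
  set B := A.map ι - Matrix.scalar (Fin n) (AdjoinRoot.root f) with hB
  have hupd : ∀ v u : Fin n → F, (A + Matrix.vecMulVec v u).map ι -
      Matrix.scalar (Fin n) (AdjoinRoot.root f) =
      B + vecMulVec (fun i => ι (v i)) (fun i => ι (u i)) := by
    intro v u
    ext i j
    simp only [hB, Matrix.sub_apply, Matrix.add_apply, Matrix.map_apply, vecMulVec_apply, map_add, map_mul]
    ring
  have hr : ∀ v u : Fin n → F, n - (aeval (A + Matrix.vecMulVec v u) f).rank =
      (n - (B + vecMulVec (fun i => ι (v i)) (fun i => ι (u i))).rank) * d := by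
    intro v u
    rw [(aux_key f (A + Matrix.vecMulVec v u)).1, hupd, hdeg, mul_comm]
  have hBr : n - B.rank = ℓ := by
    have := (aux_key f A).1
    rw [hinv, hdeg, mul_comm] at this
    exact (Nat.eq_of_mul_eq_mul_left hd this).symm
  have hBn : B.rank ≤ n := by simpa using B.rank_le_width
  have hCn : ∀ v u, (B + vecMulVec v u).rank ≤ n := fun v u => by
    simpa using (B + vecMulVec v u).rank_le_width
  set P : Submodule F (Fin n → F) := LinearMap.range (aeval A f).mulVecLin with hP
  set Q : Submodule F (Fin n → F) := LinearMap.range (aeval Aᵀ f).mulVecLin with hQ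
  have hPmem : ∀ v, v ∈ P ↔ ∀ y, Bᵀ *ᵥ y = 0 → y ⬝ᵥ (fun i => ι (v i)) = 0 := (aux_key f A).2
  have hQmem : ∀ u, u ∈ Q ↔ ∀ x, B *ᵥ x = 0 → x ⬝ᵥ (fun i => ι (u i)) = 0 := by
    have h := (aux_key f Aᵀ).2
    have h2 : (Aᵀ.map (algebraMap F (AdjoinRoot f)) - Matrix.scalar (Fin n) (AdjoinRoot.root f))ᵀ = B := by
      rw [hB, transpose_sub, transpose_map, transpose_transpose]
      simp [hι]
    rw [h2] at h
    exact h
  set c := Fintype.card F with hc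
  set r := (aeval A f).rank with hrdef
  have hrn : r ≤ n := by simpa using (aeval A f).rank_le_width
  have hPc : Nat.card P = c ^ r := aux_card _
  have hQc : Nat.card Q = c ^ r := by
    rw [hQ, aux_card, aux_aeval_transpose, Matrix.rank_transpose]
  have hVc : Nat.card (Fin n → F) = c ^ n := by simp [hc]
  have hc0 : (c : ℚ) ≠ 0 := by simp [hc]
  have hqn : q ^ n = (c : ℚ) ^ r * c ^ (ℓ * d) := by
    rw [hq, ← pow_add]; congr 1; omega
  refine ⟨?_, ?_, ?_⟩
  · have hcompl : ∀ R : Submodule F (Fin n → F), Nat.card R = c ^ r →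
        (Nat.card {v : Fin n → F // v ∉ R} : ℚ) = (c : ℚ) ^ n - c ^ r := by
      intro R hR
      have h := Nat.card_congr (Equiv.sumCompl (fun v : Fin n → F => v ∈ R))
      rw [Nat.card_sum, hVc] at h
      change Nat.card R + _ = _ at h
      rw [hR] at h
      have : ((c ^ r + Nat.card {v : Fin n → F // v ∉ R} : ℕ) : ℚ) = (c ^ n : ℕ) := by rw [h]
      push_cast at this
      linarith
    let e : {v : Fin n → F // v ∉ P} × {u : Fin n → F // u ∉ Q} →
        {p : (Fin n → F) × (Fin n → F) //
        n - (Polynomial.aeval (A + Matrix.vecMulVec p.1 p.2) f).rank = (ℓ - 1) * d} :=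
      fun w => ⟨(w.1.1, w.2.1), by
        have h1 := w.1.2
        have h2 := w.2.2
        rw [hPmem] at h1
        rw [hQmem] at h2
        push Not at h1 h2
        obtain ⟨y, hy, hyv⟩ := h1
        obtain ⟨x, hx, hxu⟩ := h2
        have h3 := aux_lt B _ _ y x hy hyv hx hxu
        have h4 := aux_near B (fun i => ι (w.1.1 i)) (fun i => ι (w.2.1 i))
        rw [hr]
        congr 1
        dsimp only at h3 h4 ⊢
        omega⟩
    have he : Function.Injective e := by
      intro a b h
      have h := congrArg Subtype.val h
      simp only [e, Prod.mk.injEq] at h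
      exact Prod.ext (Subtype.ext h.1) (Subtype.ext h.2)
    have h := Nat.card_le_card_of_injective e he
    rw [Nat.card_prod] at h
    have h' : ((Nat.card {v : Fin n → F // v ∉ P} * Nat.card {u : Fin n → F // u ∉ Q} : ℕ) : ℚ) ≤ _ :=
      Nat.cast_le.mpr h
    rw [Nat.cast_mul, hcompl P hPc, hcompl Q hQc] at h'
    refine le_trans (le_of_eq ?_) h'
    have hN : (c : ℚ) ^ (ℓ * d) ≠ 0 := pow_ne_zero _ hc0
    rw [mul_comm 2 n, pow_mul q n 2, ← mul_pow, hqn, ← sq, ← hq, hqn, hq]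
    generalize (c : ℚ) ^ (ℓ * d) = N at hN
    field_simp
  · let e : {p : (Fin n → F) × (Fin n → F) //
        n - (Polynomial.aeval (A + Matrix.vecMulVec p.1 p.2) f).rank = (ℓ + 1) * d} → P × Q :=
      fun p => (⟨p.1.1, by
        have h := p.2
        rw [hr] at h
        have h := Nat.eq_of_mul_eq_mul_right hd h
        rw [hPmem]
        intro y hy
        by_contra hyv
        have h3 := aux_le B _ (fun i => ι (p.1.2 i)) y hy hyv
        omega⟩, ⟨p.1.2, by
        have h := p.2
        rw [hr] at h
        have h := Nat.eq_of_mul_eq_mul_right hd h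
        rw [hQmem]
        intro x hx
        by_contra hxu
        have h3 := aux_le Bᵀ _ (fun i => ι (p.1.1 i)) x (by rwa [transpose_transpose]) hxu
        rw [Matrix.rank_transpose, ← Matrix.rank_transpose (Bᵀ + _), transpose_add,
          transpose_transpose, transpose_vecMulVec] at h3
        omega⟩)
    have he : Function.Injective e := by
      intro a b h
      simp only [e, Prod.mk.injEq, Subtype.mk.injEq] at h
      exact Subtype.ext (Prod.ext h.1 h.2)
    have h := Nat.card_le_card_of_injective e he
    rw [Nat.card_prod, hPc, hQc] at h
    have h' : _ ≤ ((c ^ r * c ^ r : ℕ) : ℚ) := Nat.cast_le.mpr h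
    refine le_trans h' (le_of_eq ?_)
    have hN : (c : ℚ) ^ (ℓ * d) ≠ 0 := pow_ne_zero _ hc0
    rw [mul_comm 2 n, pow_mul q n 2, hqn, hq, mul_comm 2, pow_mul _ (ℓ * d) 2]
    push_cast
    generalize (c : ℚ) ^ (ℓ * d) = N at hN
    field_simp
  · intro v u
    rw [hr]
    have h4 := aux_near B (fun i => ι (v i)) (fun i => ι (u i))
    have h5 := hCn (fun i => ι (v i)) (fun i => ι (u i))
    have : n - (B + vecMulVec (fun i => ι (v i)) (fun i => ι (u i))).rank = ℓ - 1 ∨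
      n - (B + vecMulVec (fun i => ι (v i)) (fun i => ι (u i))).rank = ℓ ∨
      n - (B + vecMulVec (fun i => ι (v i)) (fun i => ι (u i))).rank = ℓ + 1 := by omega
    rcases this with h | h | h <;> rw [h] <;> simp
end

section
/- Let F be a finite field with q elements, let n and k be positive integers, let A ∈ M_n(F), and let f ∈ F[z] be a monic irreducible polynomial of degree d that does not divide the minimal polynomial of A. Then the number of pairs (U, V) with U ∈ F^(k×n) and V ∈ F^(n×k) such that f does not divide the minimal polynomial of A + V·U is at least (1 − q^(−d)) · q^(2nk) if k = 1, and at least (1 − (q^d + 1)/q^(2d)) · q^(2nk) if k ≥ 2. -/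
open Matrix in
lemma pm_key {F K : Type*} [Field F] [Field K] [Algebra F K] {n : ℕ} (a : K)
    (ha : Algebra.adjoin F {a} = ⊤) (w : Fin n → K) (C : Matrix (Fin n) (Fin n) F)
    (h : ∀ i, a * w i - (C.map (algebraMap F K) *ᵥ w) i ∈ Submodule.span F (Set.range w))
    (hw : w ≠ 0) : Submodule.span F (Set.range w) = ⊤ := by
  set W := Submodule.span F (Set.range w) with hW
  have hwm : ∀ i, w i ∈ W := fun i => Submodule.subset_span ⟨i, rfl⟩
  have h1 : ∀ x ∈ W, a * x ∈ W := by
    intro x hx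
    induction hx using Submodule.span_induction with
    | mem x hx =>
      obtain ⟨i, rfl⟩ := hx
      have h2 : (C.map (algebraMap F K) *ᵥ w) i ∈ W := by
        simp only [Matrix.mulVec, dotProduct, Matrix.map_apply]
        refine Submodule.sum_mem _ fun j _ => ?_
        rw [← Algebra.smul_def]
        exact W.smul_mem _ (hwm j)
      have := W.add_mem (h i) h2
      simpa using this
    | zero => simp
    | add x y _ _ hx hy => rw [mul_add]; exact W.add_mem hx hy
    | smul c x _ hx => rw [mul_smul_comm]; exact W.smul_mem _ hx
  have h2 : ∀ b : K, ∀ x ∈ W, b * x ∈ W := by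
    intro b
    have hb : b ∈ Algebra.adjoin F {a} := by rw [ha]; trivial
    induction hb using Algebra.adjoin_induction with
    | mem x hx => rw [Set.mem_singleton_iff] at hx; rw [hx]; exact h1
    | algebraMap r => intro x hx; rw [← Algebra.smul_def]; exact W.smul_mem _ hx
    | add x y _ _ hx hy => intro t ht; rw [add_mul]; exact W.add_mem (hx t ht) (hy t ht)
    | mul x y _ _ hx hy => intro t ht; rw [mul_assoc]; exact hx _ (hy t ht)
  obtain ⟨i, hi⟩ := Function.ne_iff.1 hw
  rw [eq_top_iff]
  intro y _
  have := h2 (y / w i) _ (hwm i)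
  rwa [div_mul_cancel₀ _ hi] at this

open Matrix in
lemma pm_row {F K : Type*} [Field F] [Field K] [Algebra F K] {n k : ℕ} (a : K)
    (ha : Algebra.adjoin F {a} = ⊤) (A : Matrix (Fin n) (Fin n) F) (R : Matrix (Fin n) (Fin n) K)
    (hR : (a • (1 : Matrix (Fin n) (Fin n) K) - A.map (algebraMap F K)) * R = 1)
    (V : Matrix (Fin n) (Fin k) F) (z : Fin k → K) (hz : z ≠ 0)
    (h : ∀ i, z i ∈ Submodule.span F (Set.range (R *ᵥ (V.map (algebraMap F K) *ᵥ z)))) :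
    Submodule.span F (Set.range (R *ᵥ (V.map (algebraMap F K) *ᵥ z))) = ⊤ := by
  set w := R *ᵥ (V.map (algebraMap F K) *ᵥ z) with hw
  have e : a • w - A.map (algebraMap F K) *ᵥ w = V.map (algebraMap F K) *ᵥ z := by
    have : (a • (1 : Matrix (Fin n) (Fin n) K) - A.map (algebraMap F K)) *ᵥ w
        = V.map (algebraMap F K) *ᵥ z := by
      rw [hw, Matrix.mulVec_mulVec, hR, Matrix.one_mulVec]
    rwa [Matrix.sub_mulVec, Matrix.smul_mulVec, Matrix.one_mulVec] at this
  apply pm_key a ha w A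
  · intro i
    have := congrFun e i
    simp only [Pi.sub_apply, Pi.smul_apply, smul_eq_mul] at this
    rw [this]
    simp only [Matrix.mulVec, dotProduct, Matrix.map_apply]
    refine Submodule.sum_mem _ fun j _ => ?_
    rw [← Algebra.smul_def]
    exact Submodule.smul_mem _ _ (h j)
  · intro h0
    apply hz
    funext i
    have := h i
    rw [h0] at this
    have h3 : Submodule.span F (Set.range (0 : Fin n → K)) = ⊥ := by
      rw [Submodule.span_eq_bot]; rintro x ⟨i, rfl⟩; rfl
    rw [h3] at this
    simpa using this

lemma pm_fiber {E G : Type*} [AddCommGroup E] [AddCommGroup G] [Fintype E] [Fintype G]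
    [DecidableEq G] (L : E →+ G) (hL : Function.Surjective L) (g : G) :
    (Finset.univ.filter fun x => L x = g).card * Fintype.card G = Fintype.card E := by
  have h := Finset.card_eq_sum_card_fiberwise (s := (Finset.univ : Finset E))
    (t := (Finset.univ : Finset G)) (f := L) (fun _ _ => by simp)
  rw [Finset.card_univ] at h
  rw [h, Finset.sum_congr rfl (fun b _ => AddMonoidHom.card_fiber_eq_of_mem_range L (hL b) (hL g))]
  simp [mul_comm]

/-- a nonzero solution space of `m` independent equations in `m+1` unknowns is a line. -/
lemma pm_line {K : Type*} [Field K] {m : ℕ} (N : Matrix (Fin m) (Fin (m + 1)) K)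
    (h : ∀ y : Fin m → K, Matrix.vecMul y N = 0 → y = 0) :
    ∃ z0 : Fin (m + 1) → K, z0 ≠ 0 ∧ Matrix.mulVec N z0 = 0 ∧
      ∀ z, Matrix.mulVec N z = 0 → ∃ c : K, c • z0 = z := by
  have hli : LinearIndependent K N.row := by
    rw [← Matrix.vecMul_injective_iff]
    intro y y' hy
    have : Matrix.vecMul (y - y') N = 0 := by
      rw [Matrix.sub_vecMul]; exact sub_eq_zero.2 hy
    exact sub_eq_zero.1 (h _ this)
  have hr := hli.rank_matrix
  have h1 := LinearMap.finrank_range_add_finrank_ker N.mulVecLin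
  have h2 : Module.finrank K (LinearMap.ker N.mulVecLin) = 1 := by
    rw [Matrix.rank] at hr
    simp at hr h1
    omega
  obtain ⟨⟨z0, hz0⟩, hne, hall⟩ := finrank_eq_one_iff'.1 h2
  refine ⟨z0, fun h => hne (Subtype.ext h), by simpa using hz0, fun z hz => ?_⟩
  obtain ⟨c, hc⟩ := hall ⟨z, by simpa using hz⟩
  exact ⟨c, congrArg Subtype.val hc⟩

open Matrix in
lemma pm_minpoly {F : Type*} [Field F] {n : ℕ} (B : Matrix (Fin n) (Fin n) F)
    (f : Polynomial F) (hirr : Irreducible f) [Fact (Irreducible f)] :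
    f ∣ minpoly F B ↔ ((AdjoinRoot.root f) • (1 : Matrix (Fin n) (Fin n) (AdjoinRoot f))
      - B.map (algebraMap F (AdjoinRoot f))).det = 0 := by
  have hc : ((AdjoinRoot.root f) • (1 : Matrix (Fin n) (Fin n) (AdjoinRoot f))
      - B.map (algebraMap F (AdjoinRoot f))).det = AdjoinRoot.mk f B.charpoly := by
    rw [← AdjoinRoot.aeval_eq, Polynomial.aeval_def, ← Polynomial.eval_map,
      ← Matrix.charpoly_map, Matrix.eval_charpoly, Matrix.scalar_apply, Matrix.smul_one_eq_diagonal]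
  constructor
  · intro h
    rw [hc, AdjoinRoot.mk_eq_zero]
    exact h.trans (Matrix.minpoly_dvd_charpoly B)
  · intro h
    obtain ⟨x, hx, h0⟩ := Matrix.exists_mulVec_eq_zero_iff.2 h
    rw [Matrix.sub_mulVec, Matrix.smul_mulVec, Matrix.one_mulVec, sub_eq_zero] at h0
    have hp : ∀ p : Polynomial F, ((Polynomial.aeval B p).map (algebraMap F (AdjoinRoot f))) *ᵥ x
        = (AdjoinRoot.mk f p) • x := by
      intro p
      induction p using Polynomial.induction_on' with
      | add p r hp hr => simp only [map_add, add_smul, ← hp, ← hr, ← Matrix.add_mulVec]; congr 1; ext; simp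
      | monomial i c =>
        induction i generalizing c with
        | zero => 
          ext i
          simp [Matrix.mulVec, dotProduct, Matrix.algebraMap_matrix_apply, apply_ite]
        | succ i ih =>
          have e : Polynomial.monomial (i+1) c = Polynomial.monomial i c * (Polynomial.X : Polynomial F) := by
            rw [Polynomial.monomial_mul_X]
          rw [e, map_mul, map_mul, Polynomial.aeval_X, Matrix.map_mul, ← Matrix.mulVec_mulVec, ← h0,
            Matrix.mulVec_smul, ih, smul_smul, AdjoinRoot.mk_X, mul_comm]
    have := hp (minpoly F B)
    rw [minpoly.aeval] at this
    have h1 : (AdjoinRoot.mk f (minpoly F B)) • x = 0 := by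
      rw [← this]; ext; simp [Matrix.mulVec, dotProduct]
    rw [smul_eq_zero] at h1
    exact AdjoinRoot.mk_eq_zero.1 (h1.resolve_right hx)

open Matrix in
/-- the first `m` rows are dependent -/
def PmDep {F K : Type*} [Field F] [Field K] [Algebra F K] {n m : ℕ}
    (R : Matrix (Fin n) (Fin n) K) (U' : Matrix (Fin m) (Fin n) F)
    (V : Matrix (Fin n) (Fin (m + 1)) F) (y : Fin m → K) : Prop :=
  ∀ j : Fin (m + 1), Fintype.linearCombination F
    (Rᵀ *ᵥ ((U'ᵀ).map (algebraMap F K) *ᵥ y)) (fun i => V i j) = (Fin.cons 0 y : Fin (m + 1) → K) j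

open Matrix in
def PmBad {F K : Type*} [Field F] [Field K] [Algebra F K] {n k : ℕ}
    (R : Matrix (Fin n) (Fin n) K) (U : Matrix (Fin k) (Fin n) F)
    (V : Matrix (Fin n) (Fin k) F) : Prop :=
  ∃ z : Fin k → K, z ≠ 0 ∧ ∀ i, Fintype.linearCombination F
    (R *ᵥ (V.map (algebraMap F K) *ᵥ z)) (fun j => U i j) = z i

open Matrix in
lemma pm_bad {F : Type*} [Field F] {n k : ℕ} (A : Matrix (Fin n) (Fin n) F)
    (f : Polynomial F) (hirr : Irreducible f) [Fact (Irreducible f)]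
    (R : Matrix (Fin n) (Fin n) (AdjoinRoot f))
    (hR : R * ((AdjoinRoot.root f) • (1 : Matrix (Fin n) (Fin n) (AdjoinRoot f))
      - A.map (algebraMap F (AdjoinRoot f))) = 1)
    (U : Matrix (Fin k) (Fin n) F) (V : Matrix (Fin n) (Fin k) F)
    (h : f ∣ minpoly F (A + V * U)) : PmBad R U V := by
  rw [pm_minpoly _ f hirr] at h
  obtain ⟨x, hx, h0⟩ := Matrix.exists_mulVec_eq_zero_iff.2 h
  have e : x = R *ᵥ (V.map (algebraMap F (AdjoinRoot f)) *ᵥ (U.map (algebraMap F (AdjoinRoot f)) *ᵥ x)) := by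
    have h1 : ((AdjoinRoot.root f) • (1 : Matrix (Fin n) (Fin n) (AdjoinRoot f))
      - A.map (algebraMap F (AdjoinRoot f))) *ᵥ x = V.map (algebraMap F (AdjoinRoot f)) *ᵥ (U.map (algebraMap F (AdjoinRoot f)) *ᵥ x) := by
      rw [← sub_eq_zero, ← h0, Matrix.map_add _ (map_add _), Matrix.map_mul]
      simp only [Matrix.sub_mulVec, Matrix.add_mulVec, Matrix.mulVec_mulVec]
      abel
    rw [← h1, Matrix.mulVec_mulVec, hR, Matrix.one_mulVec]
  refine ⟨U.map (algebraMap F (AdjoinRoot f)) *ᵥ x, ?_, ?_⟩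
  · intro h1
    rw [h1] at e
    apply hx
    simpa using e
  · intro i
    rw [← e, Fintype.linearCombination_apply]
    simp only [Matrix.mulVec, dotProduct, Matrix.map_apply, Algebra.smul_def]

open Matrix Classical in
lemma pm_count_row {F K : Type*} [Field F] [Field K] [Algebra F K] [Fintype F] [Fintype K] {n m : ℕ}
    (a : K)
    (ha : Algebra.adjoin F {a} = ⊤) (A : Matrix (Fin n) (Fin n) F) (R : Matrix (Fin n) (Fin n) K)
    (hR : (a • (1 : Matrix (Fin n) (Fin n) K) - A.map (algebraMap F K)) * R = 1)
    (U' : Matrix (Fin m) (Fin n) F) (V : Matrix (Fin n) (Fin (m + 1)) F)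
    (hnd : ¬ ∃ y : Fin m → K, y ≠ 0 ∧ PmDep R U' V y) :
    (Finset.univ.filter fun u : Fin n → F =>
      PmBad R (Matrix.of (Fin.cons u (fun i j => U' i j) : Fin (m + 1) → Fin n → F)) V).card * Fintype.card K
      ≤ Fintype.card (Fin n → F) := by
  set Uk := U'.map (algebraMap F K) with hUk
  set Vk := V.map (algebraMap F K) with hVk
  let P : Matrix (Fin m) (Fin (m + 1)) K := (1 : Matrix (Fin (m+1)) (Fin (m+1)) K).submatrix Fin.succ id
  let N : Matrix (Fin m) (Fin (m + 1)) K := P - Uk * (R * Vk)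
  have hP : ∀ z, P *ᵥ z = fun i => z (Fin.succ i) := by
    intro z
    funext i
    simp [P, Matrix.mulVec, dotProduct, Matrix.one_apply]
  have hP' : ∀ y, y ᵥ* P = (Fin.cons 0 y : Fin (m + 1) → K) := by
    intro y
    funext j
    refine Fin.cases ?_ (fun j => ?_) j
    · simp [P, Matrix.vecMul, dotProduct, Matrix.one_apply]
    · simp [P, Matrix.vecMul, dotProduct, Matrix.one_apply]
  obtain ⟨z0, hz0, hN0, hall⟩ := pm_line N (by
    intro y hy
    by_contra hy0
    apply hnd
    refine ⟨y, hy0, fun j => ?_⟩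
    rw [Matrix.vecMul_sub, hP', sub_eq_zero] at hy
    rw [hy, Fintype.linearCombination_apply]
    rw [← Matrix.vecMul_vecMul, ← Matrix.vecMul_vecMul,
      Matrix.mulVec_transpose, Matrix.transpose_map, Matrix.mulVec_transpose]
    simp only [Algebra.smul_def]
    conv_rhs => rw [Matrix.vecMul, dotProduct]
    refine Finset.sum_congr rfl fun i _ => ?_
    rw [hVk, Matrix.map_apply, mul_comm])
  set w := R *ᵥ (Vk *ᵥ z0) with hw
  have hN0' : ∀ i, Fintype.linearCombination F w (fun j => U' i j) = z0 i.succ := by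
    intro i
    rw [Matrix.sub_mulVec, hP, sub_eq_zero] at hN0
    have := congrFun hN0 i
    refine Eq.trans ?_ this.symm
    rw [← Matrix.mulVec_mulVec, ← Matrix.mulVec_mulVec, Fintype.linearCombination_apply]
    simp only [Algebra.smul_def]
    rfl
  have himp : ∀ u : Fin n → F, PmBad R (Matrix.of (Fin.cons u (fun i j => U' i j) : Fin (m + 1) → Fin n → F)) V →
      Fintype.linearCombination F w u = z0 0 := by
    rintro u ⟨z, hz, h⟩
    obtain ⟨c, rfl⟩ := hall z (by
      rw [Matrix.sub_mulVec, hP, sub_eq_zero]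
      funext i
      have : Fintype.linearCombination F (R *ᵥ (V.map (algebraMap F K) *ᵥ z)) (fun j => U' i j) = z i.succ := h i.succ
      rw [← this, ← Matrix.mulVec_mulVec, ← Matrix.mulVec_mulVec,
        Fintype.linearCombination_apply]
      simp only [Algebra.smul_def]
      rfl)
    have hc : c ≠ 0 := by rintro rfl; simp at hz
    have : Fintype.linearCombination F (R *ᵥ (V.map (algebraMap F K) *ᵥ (c • z0))) u = (c • z0) 0 := h 0
    rw [Matrix.mulVec_smul, Matrix.mulVec_smul, ← hVk, ← hw,
      Fintype.linearCombination_apply] at this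
    rw [Fintype.linearCombination_apply]
    apply mul_left_cancel₀ hc
    rw [Finset.mul_sum]
    simpa [mul_smul_comm] using this
  by_cases hex : ∃ u : Fin n → F, Fintype.linearCombination F w u = z0 0
  · obtain ⟨u, hu⟩ := hex
    have htop : Submodule.span F (Set.range w) = ⊤ := by
      apply pm_row a ha A R hR V z0 hz0
      intro i
      rw [← hVk, ← hw, ← Fintype.range_linearCombination]
      refine Fin.cases ?_ (fun i => ?_) i
      · exact ⟨u, hu⟩
      · exact ⟨_, hN0' i⟩
    have hs : Function.Surjective (Fintype.linearCombination F w) := by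
      rw [← LinearMap.range_eq_top, Fintype.range_linearCombination, htop]
    have := pm_fiber (Fintype.linearCombination F w).toAddMonoidHom hs (z0 0)
    rw [← this]
    gcongr with u
    exact himp u
  · have : (Finset.univ.filter fun u : Fin n → F =>
      PmBad R (Matrix.of (Fin.cons u (fun i j => U' i j) : Fin (m + 1) → Fin n → F)) V) = ∅ := by
      rw [Finset.filter_eq_empty_iff]
      exact fun u _ hu => hex ⟨u, himp u hu⟩
    rw [this]; simp

open Matrix Classical in
lemma pm_count_dep {F K : Type*} [Field F] [Field K] [Algebra F K] [Fintype F] [Fintype K] {n m : ℕ}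
    (a : K)
    (ha : Algebra.adjoin F {a} = ⊤) (A : Matrix (Fin n) (Fin n) F) (R : Matrix (Fin n) (Fin n) K)
    (hR : R * (a • (1 : Matrix (Fin n) (Fin n) K) - A.map (algebraMap F K)) = 1)
    (U' : Matrix (Fin m) (Fin n) F) (y : Fin m → K) (hy : y ≠ 0) :
    (Finset.univ.filter fun V : Matrix (Fin n) (Fin (m + 1)) F => PmDep R U' V y).card
      * Fintype.card K ^ (m + 1) ≤ Fintype.card (Matrix (Fin n) (Fin (m + 1)) F) := by
  by_cases hex : ∃ V : Matrix (Fin n) (Fin (m + 1)) F, PmDep R U' V y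
  · obtain ⟨V0, hV0⟩ := hex
    set w := (Rᵀ *ᵥ ((U'ᵀ).map (algebraMap F K) *ᵥ y)) with hw
    have htop : Submodule.span F (Set.range w) = ⊤ := by
      apply pm_row a ha Aᵀ Rᵀ ?_ U'ᵀ y hy
      · intro i
        rw [← hw, ← Fintype.range_linearCombination]
        exact ⟨_, hV0 i.succ⟩
      · rw [Matrix.transpose_map, ← Matrix.transpose_one, ← Matrix.transpose_smul,
          ← Matrix.transpose_sub, ← Matrix.transpose_mul, hR]
    have hs : Function.Surjective (Fintype.linearCombination F w) := by
      rw [← LinearMap.range_eq_top, Fintype.range_linearCombination, htop]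
    let L : Matrix (Fin n) (Fin (m + 1)) F →+ (Fin (m + 1) → K) :=
      { toFun := fun V j => Fintype.linearCombination F w (fun i => V i j)
        map_zero' := by
          funext j
          exact map_zero (Fintype.linearCombination F w)
        map_add' := fun V V' => by
          funext j
          exact map_add (Fintype.linearCombination F w) (fun i => V i j) (fun i => V' i j) }
    have hL : Function.Surjective L := by
      intro g
      choose t ht using hs
      exact ⟨fun i j => t (g j) i, funext fun j => ht (g j)⟩
    have := pm_fiber L hL (Fin.cons 0 y : Fin (m + 1) → K)
    rw [← this, Fintype.card_fun, Fintype.card_fin]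
    gcongr with V
    exact fun h => funext h
  · have : (Finset.univ.filter fun V : Matrix (Fin n) (Fin (m + 1)) F => PmDep R U' V y) = ∅ := by
      rw [Finset.filter_eq_empty_iff]
      exact fun u _ hu => hex ⟨u, hu⟩
    rw [this]; simp

lemma pm_dep_smul {F K : Type*} [Field F] [Field K] [Algebra F K] {n m : ℕ}
    (R : Matrix (Fin n) (Fin n) K) (U' : Matrix (Fin m) (Fin n) F)
    (V : Matrix (Fin n) (Fin (m + 1)) F) (y : Fin m → K) (h : PmDep R U' V y) (c : K) :
    PmDep R U' V (c • y) := by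
  intro j
  have := h j
  rw [Matrix.mulVec_smul, Matrix.mulVec_smul]
  rw [Fintype.linearCombination_apply] at *
  have e : (Fin.cons 0 (c • y) : Fin (m + 1) → K) j = c * (Fin.cons 0 y : Fin (m + 1) → K) j := by
    refine Fin.cases ?_ (fun j => ?_) j <;> simp
  rw [e, ← this, Finset.mul_sum]
  simp [mul_smul_comm]

open Classical in
lemma pm_count_dep2 {F K : Type*} [Field F] [Field K] [Algebra F K] [Fintype F] [Fintype K] {n m : ℕ}
    (a : K)
    (ha : Algebra.adjoin F {a} = ⊤) (A : Matrix (Fin n) (Fin n) F) (R : Matrix (Fin n) (Fin n) K)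
    (hR : R * (a • (1 : Matrix (Fin n) (Fin n) K) - A.map (algebraMap F K)) = 1)
    (U' : Matrix (Fin m) (Fin n) F) :
    (Finset.univ.filter fun V : Matrix (Fin n) (Fin (m + 1)) F =>
      ∃ y : Fin m → K, y ≠ 0 ∧ PmDep R U' V y).card * (Fintype.card K - 1)
      * Fintype.card K ^ (m + 1) ≤
      (Fintype.card K ^ m - 1) * Fintype.card (Matrix (Fin n) (Fin (m + 1)) F) := by
  set S := (Finset.univ.filter fun V : Matrix (Fin n) (Fin (m + 1)) F =>
      ∃ y : Fin m → K, y ≠ 0 ∧ PmDep R U' V y) with hS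
  set Y := Finset.univ.filter (fun y : Fin m → K => y ≠ 0) with hY
  have hYc : Y.card = Fintype.card K ^ m - 1 := by
    rw [hY, Finset.filter_ne', Finset.card_erase_of_mem (Finset.mem_univ _), Finset.card_univ]
    simp
  have hdc := Finset.sum_card_bipartiteAbove_eq_sum_card_bipartiteBelow
    (fun (V : Matrix (Fin n) (Fin (m + 1)) F) (y : Fin m → K) => PmDep R U' V y) (s := S) (t := Y)
  have h1 : S.card * (Fintype.card K - 1) ≤
      ∑ V ∈ S, (Finset.bipartiteAbove (fun (V : Matrix (Fin n) (Fin (m + 1)) F) (y : Fin m → K) => PmDep R U' V y) Y V).card := by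
    rw [← smul_eq_mul]
    apply Finset.card_nsmul_le_sum
    intro V hV
    rw [hS, Finset.mem_filter] at hV
    obtain ⟨-, y, hy, hd⟩ := hV
    have : (Finset.univ.filter (fun c : K => c ≠ 0)).card = Fintype.card K - 1 := by
      rw [Finset.filter_ne', Finset.card_erase_of_mem (Finset.mem_univ _), Finset.card_univ]
    rw [← this]
    apply Finset.card_le_card_of_injOn (fun c => c • y)
    · intro c hc
      simp only [Finset.coe_filter, Finset.mem_univ, true_and, Set.mem_ofPred_eq] at hc
      simp only [Finset.bipartiteAbove, Finset.mem_coe, Finset.mem_filter, hY, Finset.mem_univ, true_and]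
      exact ⟨smul_ne_zero hc hy, pm_dep_smul R U' V y hd c⟩
    · intro c _ c' _ h
      exact smul_left_injective K hy h
  calc _ ≤ (∑ V ∈ S, (Finset.bipartiteAbove (fun (V : Matrix (Fin n) (Fin (m + 1)) F) (y : Fin m → K) => PmDep R U' V y) Y V).card) * Fintype.card K ^ (m + 1) := by gcongr
    _ = ∑ y ∈ Y, (Finset.bipartiteBelow (fun (V : Matrix (Fin n) (Fin (m + 1)) F) (y : Fin m → K) => PmDep R U' V y) S y).card * Fintype.card K ^ (m + 1) := by
      rw [hdc, Finset.sum_mul]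
    _ ≤ ∑ y ∈ Y, Fintype.card (Matrix (Fin n) (Fin (m + 1)) F) := by
      apply Finset.sum_le_sum
      intro y hy
      refine le_trans ?_ (pm_count_dep a ha A R hR U' y (Finset.mem_filter.1 hy).2)
      gcongr
      intro V hV
      simp only [Finset.bipartiteBelow, Finset.mem_filter] at hV
      simp [hV.2]
    _ = _ := by rw [Finset.sum_const, hYc, smul_eq_mul]

lemma pm_card {F : Type*} [Fintype F] (a b : ℕ) :
    Fintype.card (Matrix (Fin a) (Fin b) F) = Fintype.card F ^ (a * b) := by
  rw [Fintype.card_congr (Matrix.of (m := Fin a) (n := Fin b) (α := F)).symm, Fintype.card_fun,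
    Fintype.card_fun, Fintype.card_fin, Fintype.card_fin, ← pow_mul, mul_comm]

open Classical in
lemma pm_total {F K : Type*} [Field F] [Field K] [Algebra F K] [Fintype F] [Fintype K] {n m : ℕ}
    (a : K)
    (ha : Algebra.adjoin F {a} = ⊤) (A : Matrix (Fin n) (Fin n) F) (R : Matrix (Fin n) (Fin n) K)
    (hR : R * (a • (1 : Matrix (Fin n) (Fin n) K) - A.map (algebraMap F K)) = 1)
    (hR' : (a • (1 : Matrix (Fin n) (Fin n) K) - A.map (algebraMap F K)) * R = 1) :
    ((Finset.univ.filter fun p : Matrix (Fin (m + 1)) (Fin n) F × Matrix (Fin n) (Fin (m + 1)) F =>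
      PmBad R p.1 p.2).card : ℚ) * (Fintype.card K : ℚ) ^ (m + 2) ≤
      (Fintype.card F : ℚ) ^ (2 * n * (m + 1)) *
        ((Fintype.card K : ℚ) ^ m - 1 + (Fintype.card K : ℚ) ^ (m + 1)) := by
  set Q := Fintype.card K with hQ
  have hQ1 : 1 < Q := Fintype.one_lt_card
  set c := Fintype.card (Fin n → F) with hc
  let cnt : Matrix (Fin m) (Fin n) F × Matrix (Fin n) (Fin (m + 1)) F → ℕ := fun p =>
    (Finset.univ.filter fun u : Fin n → F =>
      PmBad R (Matrix.of (Fin.cons u (fun i j => p.1 i j) : Fin (m + 1) → Fin n → F)) p.2).card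
  let dep : Matrix (Fin m) (Fin n) F × Matrix (Fin n) (Fin (m + 1)) F → Prop := fun p =>
    ∃ y : Fin m → K, y ≠ 0 ∧ PmDep R p.1 p.2 y
  set D := (Finset.univ.filter dep).card with hD
  set T := Fintype.card (Matrix (Fin m) (Fin n) F × Matrix (Fin n) (Fin (m + 1)) F) with hT
  have hN : (Finset.univ.filter fun p : Matrix (Fin (m + 1)) (Fin n) F × Matrix (Fin n) (Fin (m + 1)) F =>
      PmBad R p.1 p.2).card ≤ ∑ p, cnt p := by
    rw [← Finset.card_sigma]
    apply Finset.card_le_card_of_injOn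
      (fun p => ⟨(Matrix.of (fun i j => p.1 (Fin.succ i) j), p.2), fun j => p.1 0 j⟩)
    · rintro ⟨U, V⟩ h
      simp only [Finset.coe_filter, Finset.mem_univ, true_and, Set.mem_ofPred_eq] at h
      simp only [Finset.mem_coe, Finset.mem_sigma, Finset.mem_univ, true_and, Finset.mem_filter]
      convert h using 1
      ext i j
      refine Fin.cases ?_ (fun i => ?_) i <;> simp
    · rintro ⟨U, V⟩ _ ⟨U', V'⟩ _ h
      simp only [Sigma.mk.injEq, Prod.mk.injEq, heq_eq_eq] at h
      obtain ⟨⟨h1, h2⟩, h3⟩ := h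
      refine Prod.ext ?_ h2
      ext i j
      refine Fin.cases ?_ (fun i => ?_) i
      · exact congrFun h3 j
      · exact congrFun (congrFun h1 i) j
  have hcnt : ∀ p, (cnt p : ℚ) * Q ≤ c + (if dep p then (c : ℚ) * (Q - 1) else 0) := by
    intro p
    split_ifs with h
    · have : cnt p ≤ c := Finset.card_le_univ _
      have : (cnt p : ℚ) * Q ≤ c * Q := by gcongr
      linarith
    · have := pm_count_row a ha A R hR' p.1 p.2 h
      rw [add_zero]
      exact_mod_cast this
  have hsum : (∑ p, (cnt p : ℚ)) * Q ≤ T * c + D * (c * (Q - 1)) := by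
    rw [Finset.sum_mul]
    refine (Finset.sum_le_sum fun p _ => hcnt p).trans (le_of_eq ?_)
    rw [Finset.sum_add_distrib, ← Finset.sum_filter]
    simp [hT, hD]
  have hDle : (D : ℚ) * (Q - 1) * Q ^ (m + 1) ≤ (Q ^ m - 1) * T := by
    have h1 : D ≤ ∑ U' : Matrix (Fin m) (Fin n) F,
        (Finset.univ.filter fun V : Matrix (Fin n) (Fin (m + 1)) F => dep (U', V)).card := by
      rw [← Finset.card_sigma]
      apply Finset.card_le_card_of_injOn (fun p => ⟨p.1, p.2⟩)
      · rintro ⟨U, V⟩ h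
        simpa using h
      · rintro ⟨U, V⟩ _ ⟨U', V'⟩ _ h
        simpa using h
    have h2 : D * (Q - 1) * Q ^ (m + 1) ≤ (Q ^ m - 1) * T := by
      calc _ ≤ (∑ U' : Matrix (Fin m) (Fin n) F,
        (Finset.univ.filter fun V : Matrix (Fin n) (Fin (m + 1)) F => dep (U', V)).card) * (Q - 1) * Q ^ (m + 1) := by gcongr
        _ ≤ ∑ U' : Matrix (Fin m) (Fin n) F, (Q ^ m - 1) * Fintype.card (Matrix (Fin n) (Fin (m + 1)) F) := by
          rw [Finset.sum_mul, Finset.sum_mul]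
          exact Finset.sum_le_sum fun U' _ => pm_count_dep2 a ha A R hR U'
        _ = _ := by
          rw [Finset.sum_const, hT, Fintype.card_prod, Finset.card_univ, smul_eq_mul]; ring
    have h3 : 1 ≤ Q ^ m := Nat.one_le_pow _ _ (by omega)
    have := (Nat.cast_le (α := ℚ)).2 h2
    push_cast [Nat.cast_sub hQ1.le, Nat.cast_sub h3] at this
    exact this
  have hcT : (c : ℚ) * T = (Fintype.card F : ℚ) ^ (2 * n * (m + 1)) := by
    have : c * T = Fintype.card F ^ (2 * n * (m + 1)) := by
      rw [hc, hT, Fintype.card_prod, pm_card, pm_card, Fintype.card_fun, Fintype.card_fin,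
        ← pow_add, ← pow_add]
      congr 1; ring
    exact_mod_cast this
  rw [← hcT]
  have hN' : ((Finset.univ.filter fun p : Matrix (Fin (m + 1)) (Fin n) F × Matrix (Fin n) (Fin (m + 1)) F =>
      PmBad R p.1 p.2).card : ℚ) ≤ ∑ p, (cnt p : ℚ) := by exact_mod_cast hN
  calc _ ≤ (∑ p, (cnt p : ℚ)) * (Q : ℚ) ^ (m + 2) := by gcongr
    _ = (∑ p, (cnt p : ℚ)) * Q * Q ^ (m + 1) := by ring
    _ ≤ (T * c + D * (c * (Q - 1))) * Q ^ (m + 1) := by gcongr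
    _ = T * c * Q ^ (m + 1) + c * (D * (Q - 1) * Q ^ (m + 1)) := by ring
    _ ≤ T * c * Q ^ (m + 1) + c * ((Q ^ m - 1) * T) := by gcongr
    _ = _ := by ring

lemma pm_main {F : Type*} [Field F] [Fintype F] (n m : ℕ)
    (A : Matrix (Fin n) (Fin n) F) (f : Polynomial F)
    (hirr : Irreducible f) (hnd : ¬ (f ∣ minpoly F A)) :
    (1 - (1 / ((Fintype.card F : ℚ) ^ f.natDegree) + 1 / ((Fintype.card F : ℚ) ^ f.natDegree) ^ 2
      - 1 / ((Fintype.card F : ℚ) ^ f.natDegree) ^ (m + 2)))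
      * (Fintype.card F : ℚ) ^ (2 * n * (m + 1)) ≤
      (Nat.card {p : Matrix (Fin (m + 1)) (Fin n) F × Matrix (Fin n) (Fin (m + 1)) F //
        ¬ (f ∣ minpoly F (A + p.2 * p.1))} : ℚ) := by
  classical
  have : Fact (Irreducible f) := ⟨hirr⟩
  have hf0 : f ≠ 0 := hirr.ne_zero
  let pb := AdjoinRoot.powerBasis hf0
  have : Module.Finite F (AdjoinRoot f) := pb.finite
  have : Finite (AdjoinRoot f) := Module.finite_of_finite F
  haveI : Fintype (AdjoinRoot f) := Fintype.ofFinite _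
  have hcard : Fintype.card (AdjoinRoot f) = Fintype.card F ^ f.natDegree := by
    rw [Module.card_eq_pow_finrank (K := F), pb.finrank]
    rfl
  have hdet : IsUnit ((AdjoinRoot.root f) • (1 : Matrix (Fin n) (Fin n) (AdjoinRoot f))
      - A.map (algebraMap F (AdjoinRoot f))).det := by
    rw [isUnit_iff_ne_zero]
    exact fun h => hnd ((pm_minpoly A f hirr).2 h)
  have htot := pm_total (m := m) (AdjoinRoot.root f) AdjoinRoot.adjoinRoot_eq_top A _
    (Matrix.nonsing_inv_mul _ hdet) (Matrix.mul_nonsing_inv _ hdet)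
  have hle : Fintype.card (Matrix (Fin (m + 1)) (Fin n) F × Matrix (Fin n) (Fin (m + 1)) F) ≤
      Nat.card {p : Matrix (Fin (m + 1)) (Fin n) F × Matrix (Fin n) (Fin (m + 1)) F //
        ¬ (f ∣ minpoly F (A + p.2 * p.1))} +
      (Finset.univ.filter fun p : Matrix (Fin (m + 1)) (Fin n) F × Matrix (Fin n) (Fin (m + 1)) F =>
        PmBad ((AdjoinRoot.root f) • (1 : Matrix (Fin n) (Fin n) (AdjoinRoot f))
          - A.map (algebraMap F (AdjoinRoot f)))⁻¹ p.1 p.2).card := by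
    rw [Nat.card_eq_fintype_card, Fintype.card_subtype, ← Finset.card_univ,
      ← Finset.card_filter_add_card_filter_not (s := Finset.univ)
        (fun p : Matrix (Fin (m + 1)) (Fin n) F × Matrix (Fin n) (Fin (m + 1)) F =>
          ¬ (f ∣ minpoly F (A + p.2 * p.1)))]
    refine Nat.add_le_add_left (Finset.card_le_card ?_) _
    · intro p hp
      simp only [Finset.mem_filter, Finset.mem_univ, true_and, not_not] at hp ⊢
      exact pm_bad A f hirr _ (Matrix.nonsing_inv_mul _ hdet) p.1 p.2 hp
  have hall : Fintype.card (Matrix (Fin (m + 1)) (Fin n) F × Matrix (Fin n) (Fin (m + 1)) F)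
      = Fintype.card F ^ (2 * n * (m + 1)) := by
    rw [Fintype.card_prod, pm_card, pm_card, ← pow_add]
    congr 1; ring
  rw [hall] at hle
  have hle' := (Nat.cast_le (α := ℚ)).2 hle
  push_cast at hle'
  rw [hcard] at htot
  push_cast at htot
  set Q : ℚ := (Fintype.card F : ℚ) ^ f.natDegree with hQ
  have hQ0 : 0 < Q := by
    have : 0 < Fintype.card F := Fintype.card_pos
    positivity
  rw [← le_div_iff₀ (by positivity)] at htot
  have e : (Fintype.card F : ℚ) ^ (2 * n * (m + 1)) * (Q ^ m - 1 + Q ^ (m + 1)) / Q ^ (m + 2)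
      = (Fintype.card F : ℚ) ^ (2 * n * (m + 1)) * (1 / Q + 1 / Q ^ 2 - 1 / Q ^ (m + 2)) := by
    rw [mul_div_assoc]
    congr 1
    field_simp
    ring
  rw [e] at htot
  linarith

/-- if a monic irreducible `f` of degree `d` does not divide the
minimal polynomial of `A`, then the number of pairs `(U, V)` such that `f` does
not divide the minimal polynomial of `A + V·U` is at least `(1 - q^{-d}) q^(2nk)`
if `k = 1` and at least `(1 - (q^d + 1)/q^{2d}) q^(2nk)` if `k ≥ 2`. -/
theorem preserve_minpoly_not_div_count
    {F : Type*} [Field F] [Fintype F] (n k d : ℕ) (hn : 0 < n) (hk : 0 < k)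
    (q : ℚ) (hq : q = (Fintype.card F : ℚ))
    (A : Matrix (Fin n) (Fin n) F) (f : Polynomial F)
    (hmonic : f.Monic) (hirr : Irreducible f) (hdeg : f.natDegree = d)
    (hnd : ¬ (f ∣ minpoly F A)) :
    (k = 1 → (1 - 1 / q ^ d) * q ^ (2 * n * k) ≤
      (Nat.card {p : Matrix (Fin k) (Fin n) F × Matrix (Fin n) (Fin k) F //
        ¬ (f ∣ minpoly F (A + p.2 * p.1))} : ℚ)) ∧
    (2 ≤ k → (1 - (q ^ d + 1) / q ^ (2 * d)) * q ^ (2 * n * k) ≤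
      (Nat.card {p : Matrix (Fin k) (Fin n) F × Matrix (Fin n) (Fin k) F //
        ¬ (f ∣ minpoly F (A + p.2 * p.1))} : ℚ)) := by
  subst hq hdeg
  obtain ⟨m, rfl⟩ : ∃ m, k = m + 1 := ⟨k - 1, by omega⟩
  have h := pm_main n m A f hirr hnd
  have hQ0 : 0 < (Fintype.card F : ℚ) ^ f.natDegree := by
    have : 0 < Fintype.card F := Fintype.card_pos
    positivity
  constructor
  · intro hm
    obtain rfl : m = 0 := by omega
    refine le_trans (le_of_eq ?_) h
    ring
  · intro _
    refine le_trans ?_ h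
    gcongr
    rw [mul_comm 2, pow_mul]
    have : 0 ≤ 1 / ((Fintype.card F : ℚ) ^ f.natDegree) ^ (m + 2) := by positivity
    have e : ((Fintype.card F : ℚ) ^ f.natDegree + 1) / ((Fintype.card F : ℚ) ^ f.natDegree) ^ 2 =
      1 / ((Fintype.card F : ℚ) ^ f.natDegree) + 1 / ((Fintype.card F : ℚ) ^ f.natDegree) ^ 2 := by
      field_simp
    rw [e]
    linarith
end
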